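/- arXiv:2401.07373 — 2 statements merged into one kernel-verified Lean document; each statement's English description precedes it below -/
import Mathlib

section
/- There exists a constant C > 0 depending only on n and k such that the following holds: for every y ∈ ℝⁿ, every r > 0, and every strictly k-convex function u ∈ C³(B_r(y)) satisfying σ_k(D²u) = 1 in the ball B = B_r(y), one has |Du(y)| ≤ (C/r)·osc_B u, where osc_B u = sup_B u − inf_B u. -/
open Set Metric Filter Topology Bornology
open scoped RealInnerProductSpace

noncomputable section

/-- Euclidean `n`-space. -/
abbrev Euc (n : ℕ) := EuclideanSpace ℝ (Fin n)

/-- The `k`-th elementary symmetric polynomial of a vector `lam ∈ ℝⁿ`. -/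
def esymmVec {n : ℕ} (k : ℕ) (lam : Fin n → ℝ) : ℝ :=
  ∑ S ∈ Finset.powersetCard k (Finset.univ : Finset (Fin n)), ∏ i ∈ S, lam i

/-- `σ_k(A)`: the `k`-th elementary symmetric polynomial of the eigenvalues of a
symmetric matrix `A` (junk value `0` if `A` is not symmetric). -/
noncomputable def sigmaMat {n : ℕ} (k : ℕ) (A : Matrix (Fin n) (Fin n) ℝ) : ℝ := by
  classical exact if h : A.IsHermitian then esymmVec k h.eigenvalues else 0

/-- The eigenvalues of the symmetric matrix `A` lie in the Gårding cone
`Γ_k = {λ : σ_j(λ) > 0, j = 1, …, k}`. -/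
def InGardingCone {n : ℕ} (k : ℕ) (A : Matrix (Fin n) (Fin n) ℝ) : Prop :=
  ∃ h : A.IsHermitian, ∀ j : ℕ, 1 ≤ j → j ≤ k → 0 < esymmVec j h.eigenvalues

/-- The Hessian matrix of `u` at `x`, with derivatives taken within the set `s`. -/
noncomputable def hessianWithin {n : ℕ} (u : Euc n → ℝ) (s : Set (Euc n)) (x : Euc n) :
    Matrix (Fin n) (Fin n) ℝ :=
  fun i j => iteratedFDerivWithin ℝ 2 u s x
    ![EuclideanSpace.single i (1:ℝ), EuclideanSpace.single j (1:ℝ)]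

/-- The Hessian matrix `D²u(x)` of `u` at `x`. -/
noncomputable def hessian {n : ℕ} (u : Euc n → ℝ) (x : Euc n) : Matrix (Fin n) (Fin n) ℝ :=
  fun i j => iteratedFDeriv ℝ 2 u x
    ![EuclideanSpace.single i (1:ℝ), EuclideanSpace.single j (1:ℝ)]

/-- Operator norm of the Hessian matrix of `u` at `x` (derivatives within `s`). -/
noncomputable def hessOpNormWithin {n : ℕ} (u : Euc n → ℝ) (s : Set (Euc n)) (x : Euc n) : ℝ :=
  ‖Matrix.toEuclideanCLM (𝕜 := ℝ) (hessianWithin u s x)‖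

/-- A set has smooth boundary: it is the sublevel set of a smooth defining function
with nonvanishing differential on the boundary. -/
def HasSmoothBoundary {n : ℕ} (Ω : Set (Euc n)) : Prop :=
  ∃ ρ : Euc n → ℝ, ContDiff ℝ (⊤ : ℕ∞) ρ ∧ Ω = {x | ρ x < 0} ∧
    ∀ x ∈ frontier Ω, fderiv ℝ ρ x ≠ 0

/-- `c_{n,k} = (C(n,k))^{1/k}` where `C(n,k)` is the binomial coefficient. -/
noncomputable def cnk (n k : ℕ) : ℝ := (n.choose k : ℝ) ^ ((1:ℝ)/(k:ℝ))

/-- The radially symmetric subsolution `|x - x₀|²/(2c_{n,k}) − ε²/(2c_{n,k}) − M`. -/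
noncomputable def underSol {n : ℕ} (k : ℕ) (x₀ : Euc n) (ε M : ℝ) (x : Euc n) : ℝ :=
  ‖x - x₀‖^2 / (2 * cnk n k) - ε^2 / (2 * cnk n k) - M

/-- The closed ring `Ω̄^ε = closure (Ω₁ \ B̄_ε(x₀))`. -/
def ringSet {n : ℕ} (Ω₁ : Set (Euc n)) (x₀ : Euc n) (ε : ℝ) : Set (Euc n) :=
  closure (Ω₁ \ closedBall x₀ ε)

/-- `u` is a strictly `k`-convex solution of problem (2.1):
`σ_k(D²u) = 1` in `Ω^ε = Ω₁ \ B̄_ε(x₀)`, `u = 0` on `∂Ω₁`, `u = −M` on `∂B_ε(x₀)`,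
with `u ∈ C²(Ω̄^ε)`. -/
def IsSol {n : ℕ} (k : ℕ) (Ω₁ : Set (Euc n)) (x₀ : Euc n) (ε M : ℝ) (u : Euc n → ℝ) : Prop :=
  ContDiffOn ℝ 2 u (ringSet Ω₁ x₀ ε) ∧
  (∀ x ∈ Ω₁ \ closedBall x₀ ε,
      InGardingCone k (hessianWithin u (ringSet Ω₁ x₀ ε) x) ∧
      sigmaMat k (hessianWithin u (ringSet Ω₁ x₀ ε) x) = 1) ∧
  (∀ x ∈ frontier Ω₁, u x = 0) ∧
  (∀ x ∈ sphere x₀ ε, u x = -M)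

/-- `ψ` is a strictly `k`-convex solution of problem (2.2):
`σ_k(D²ψ) = 1` in `Ω₁`, `ψ = 0` on `∂Ω₁`, with `ψ ∈ C^∞(Ω̄₁)`. -/
def IsSol22 {n : ℕ} (k : ℕ) (Ω₁ : Set (Euc n)) (ψ : Euc n → ℝ) : Prop :=
  ContDiffOn ℝ (⊤ : ℕ∞) ψ (closure Ω₁) ∧
  (∀ x ∈ Ω₁, InGardingCone k (hessianWithin ψ (closure Ω₁) x) ∧
      sigmaMat k (hessianWithin ψ (closure Ω₁) x) = 1) ∧
  (∀ x ∈ frontier Ω₁, ψ x = 0)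

/-- `u` is a strictly `k`-convex solution of the Dirichlet problem on the convex ring
`Ω = Ω₁ \ Ω̄₂`: `σ_k(D²u) = 1` in `Ω`, `u = 0` on `∂Ω₁`, `u = −M` on `∂Ω₂`,
with `u ∈ C²(Ω̄)`. -/
def IsSolRing {n : ℕ} (k : ℕ) (Ω₁ Ω₂ : Set (Euc n)) (M : ℝ) (u : Euc n → ℝ) : Prop :=
  ContDiffOn ℝ 2 u (closure (Ω₁ \ closure Ω₂)) ∧
  (∀ x ∈ Ω₁ \ closure Ω₂,
      InGardingCone k (hessianWithin u (closure (Ω₁ \ closure Ω₂)) x) ∧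
      sigmaMat k (hessianWithin u (closure (Ω₁ \ closure Ω₂)) x) = 1) ∧
  (∀ x ∈ frontier Ω₁, u x = 0) ∧
  (∀ x ∈ frontier Ω₂, u x = -M)

/-- The extension `ũ` of `u`, equal to `−M` on the closed ball `B̄_ε(x₀)`. -/
noncomputable def extendBy {n : ℕ} (u : Euc n → ℝ) (x₀ : Euc n) (ε M : ℝ) (x : Euc n) : ℝ := by
  classical exact if x ∈ closedBall x₀ ε then -M else u x

/-- The extension `ũ` of `u`, equal to `−M` on the set `Ω₂`. -/
noncomputable def extendOn {n : ℕ} (u : Euc n → ℝ) (Ω₂ : Set (Euc n)) (M : ℝ) (x : Euc n) : ℝ := by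
  classical exact if x ∈ Ω₂ then -M else u x

/-- The quadratic polynomial with Hessian `A`, linear part `b` and constant term `c`. -/
noncomputable def quadPoly {n : ℕ} (A : Matrix (Fin n) (Fin n) ℝ) (b : Euc n) (c : ℝ)
    (x : Euc n) : ℝ :=
  (∑ i, ∑ j, A i j * x i * x j) / 2 + ⟪b, x⟫ + c

/-!
Let `ρ = 1 - |x - y|² / R²` with `R < r`, let `M` exceed `u` on the ball, and maximize
`|Du|² ρ² / (M - u)` over the ball of radius `R`. With `ξ` the direction of the gradient at the
maximum point, the function `2 log ∂_ξ u - log (M - u) + 2 log ρ` has a local maximum there. If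
`∂²u/∂ξ² > 0`, its first-order condition in the direction `ξ` bounds `|Du| ρ R` by `4 (M - u)`.
Otherwise its Hessian is tested against the linearized operator `∑ σ_{k-1}(λ|i) ∂_i²` in an
eigenbasis of `D²u`: third derivatives drop out by the differentiated equation, the term in `D²u`
is `k σ_k > 0` by Euler's identity, and the term `|Du|² ∑ ξ_i² σ_{k-1}(λ|i)` survives. As
`∑ ξ_i² λ_i = ∂²u/∂ξ² ≤ 0`, Chebyshev's sum inequality bounds the trace `∑ σ_{k-1}(λ|i)` of the
operator by `n ∑ ξ_i² σ_{k-1}(λ|i)`, which absorbs the error terms from the cutoff.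
-/

section NewtonInequality

open Polynomial

theorem splits_derivative {f : ℝ[X]} (hf : f.Splits) : (derivative f).Splits := by
  rw [splits_iff_card_roots] at hf ⊢
  have rolle := card_roots_le_derivative f
  have upper := card_roots' (derivative f)
  have degree := natDegree_derivative_le f
  omega

theorem two_mul_coeff_zero_mul_coeff_two_le_sq {f : ℝ[X]} (hf : f.Splits) :
    2 * (f.coeff 0 * f.coeff 2) ≤ f.coeff 1 ^ 2 := by
  suffices monic : ∀ s : Multiset ℝ, ∀ g, g = (s.map (X - C ·)).prod →
      2 * (g.coeff 0 * g.coeff 2) ≤ g.coeff 1 ^ 2 by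
    rw [hf.eq_prod_roots]
    simp only [coeff_C_mul]
    nlinarith [mul_nonneg (sq_nonneg f.leadingCoeff) (sub_nonneg.2 (monic f.roots _ rfl))]
  intro s
  induction s using Multiset.induction_on with
  | empty => rintro g rfl; simp [coeff_one]
  | cons a s ih =>
    rintro _ rfl
    simp only [Multiset.map_cons, Multiset.prod_cons]
    specialize ih _ rfl
    generalize (s.map (X - C ·)).prod = g at *
    have h0 : ((X - C a) * g).coeff 0 = -a * g.coeff 0 := by simp [sub_mul]
    have h1 : ((X - C a) * g).coeff 1 = g.coeff 0 - a * g.coeff 1 := by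
      simp [sub_mul, coeff_X_mul]
    have h2 : ((X - C a) * g).coeff 2 = g.coeff 1 - a * g.coeff 2 := by
      simp [sub_mul, coeff_X_mul]
    rw [h0, h1, h2]
    nlinarith [sq_nonneg (g.coeff 0), mul_nonneg (sq_nonneg a) (sub_nonneg.2 ih)]

theorem newton_inequality_coeff {f : ℝ[X]} (hf : f.Splits) (m : ℕ) :
    (m + 2) * (f.coeff m * f.coeff (m + 2)) ≤ (m + 1) * f.coeff (m + 1) ^ 2 := by
  induction m generalizing f with
  | zero => simpa using two_mul_coeff_zero_mul_coeff_two_le_sq hf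
  | succ m ih =>
    have h := ih (splits_derivative hf)
    simp only [coeff_derivative] at h
    push_cast at h ⊢
    have hm : (0 : ℝ) < (m + 1) * (m + 2) := by positivity
    refine le_of_mul_le_mul_left ?_ hm
    rw [Nat.add_right_comm m 1 2]
    linear_combination h

end NewtonInequality

section ElementarySymmetric

variable {ι R : Type*}

/-- The `k`-th elementary symmetric polynomial in the variables `lam i`, `i ∈ S`. Letting `S` vary
makes the partial derivatives `∂σ_{k+1}/∂λ_i` available as `esymmOn (S.erase i) lam k`. -/
def esymmOn [CommSemiring R] (S : Finset ι) (lam : ι → R) (k : ℕ) : R :=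
  ∑ T ∈ S.powersetCard k, ∏ i ∈ T, lam i

theorem esymmOn_zero [CommSemiring R] (S : Finset ι) (lam : ι → R) : esymmOn S lam 0 = 1 := by
  simp [esymmOn]

theorem esymmOn_eq_zero_of_card_lt [CommSemiring R] {S : Finset ι} {k : ℕ} (h : S.card < k)
    (lam : ι → R) : esymmOn S lam k = 0 := by
  simp [esymmOn, Finset.powersetCard_eq_empty.2 h]

theorem esymmOn_erase_succ_add [DecidableEq ι] [CommSemiring R] {S : Finset ι} {i : ι}
    (hi : i ∈ S) (lam : ι → R) (k : ℕ) :
    esymmOn (S.erase i) lam (k + 1) + lam i * esymmOn (S.erase i) lam k =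
      esymmOn S lam (k + 1) := by
  have hval : S.val = i ::ₘ (S.erase i).val := by
    rw [Finset.erase_val, Multiset.cons_erase hi]
  simp only [esymmOn, ← Finset.esymm_map_val, hval, Multiset.map_cons, Multiset.esymm,
    Multiset.powersetCard_cons, Multiset.map_add, Multiset.sum_add, Multiset.map_map,
    Function.comp_def, Multiset.prod_cons, Multiset.sum_map_mul_left]

theorem esymmOn_erase_succ [DecidableEq ι] [CommRing R] {S : Finset ι} {i : ι}
    (hi : i ∈ S) (lam : ι → R) (k : ℕ) :
    esymmOn (S.erase i) lam (k + 1) =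
      esymmOn S lam (k + 1) - lam i * esymmOn (S.erase i) lam k :=
  eq_sub_of_add_eq (esymmOn_erase_succ_add hi lam k)

theorem sum_powersetCard_erase [DecidableEq ι] {M : Type*} [AddCommMonoid M] (S : Finset ι) (k : ℕ)
    (f : ι → Finset ι → M) :
    ∑ i ∈ S, ∑ T ∈ (S.erase i).powersetCard k, f i T =
      ∑ T ∈ S.powersetCard (k + 1), ∑ i ∈ T, f i (T.erase i) := by
  rw [Finset.sum_sigma', Finset.sum_sigma']
  refine Finset.sum_bij' (fun p _ ↦ ⟨insert p.1 p.2, p.1⟩) (fun q _ ↦ ⟨q.2, q.1.erase q.2⟩)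
    ?_ ?_ ?_ ?_ ?_ <;>
  simp +contextual only [Finset.mem_sigma, Finset.mem_powersetCard, Finset.subset_erase, and_imp,
    Finset.mem_insert_self, Finset.insert_subset_iff, Finset.card_insert_of_notMem,
    Finset.erase_insert, Finset.insert_erase, Finset.card_erase_of_mem, Sigma.forall,
    implies_true, and_true, not_false_eq_true, Finset.notMem_erase,
    Nat.add_sub_cancel]
  intro T i hTS _ hi
  exact ⟨hTS hi, (T.erase_subset i).trans hTS⟩

theorem sum_mul_esymmOn_erase [DecidableEq ι] [CommSemiring R] (S : Finset ι) (a lam : ι → R)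
    (k : ℕ) :
    ∑ i ∈ S, a i * esymmOn (S.erase i) lam k =
      ∑ T ∈ S.powersetCard (k + 1), ∑ i ∈ T, a i * ∏ j ∈ T.erase i, lam j := by
  simp only [esymmOn, Finset.mul_sum]
  exact sum_powersetCard_erase S k fun i T ↦ a i * ∏ j ∈ T, lam j

theorem sum_self_mul_esymmOn_erase [DecidableEq ι] [CommSemiring R] (S : Finset ι) (lam : ι → R)
    (k : ℕ) :
    ∑ i ∈ S, lam i * esymmOn (S.erase i) lam k = (k + 1) * esymmOn S lam (k + 1) := by
  rw [sum_mul_esymmOn_erase, esymmOn, Finset.mul_sum]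
  refine Finset.sum_congr rfl fun T hT ↦ ?_
  rw [Finset.sum_congr rfl fun i hi ↦ Finset.mul_prod_erase T lam hi, Finset.sum_const,
    (Finset.mem_powersetCard.1 hT).2]
  simp

theorem sum_esymmOn_erase_succ [DecidableEq ι] [CommRing R] (S : Finset ι) (lam : ι → R) (k : ℕ) :
    ∑ i ∈ S, esymmOn (S.erase i) lam (k + 1) = (S.card - (k + 1)) * esymmOn S lam (k + 1) := by
  rw [Finset.sum_congr rfl fun i hi ↦ esymmOn_erase_succ hi lam k, Finset.sum_sub_distrib,
    sum_self_mul_esymmOn_erase, Finset.sum_const, nsmul_eq_mul, sub_mul]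

open Polynomial in
theorem esymmOn_mul_esymmOn_le_sq (S : Finset ι) (lam : ι → ℝ) (k : ℕ) :
    esymmOn S lam k * esymmOn S lam (k + 2) ≤ esymmOn S lam (k + 1) ^ 2 := by
  rcases lt_or_ge S.card (k + 2) with hcard | hcard
  · rw [esymmOn_eq_zero_of_card_lt hcard, mul_zero]
    positivity
  obtain ⟨m, hm⟩ := Nat.exists_eq_add_of_le' hcard
  have vieta : ∀ i j, i + j = S.card →
      (∏ i ∈ S, (X + C (lam i))).coeff i = esymmOn S lam j := fun i j hij ↦ by
    rw [Finset.prod_X_add_C_coeff _ _ (by omega), ← hij, Nat.add_sub_cancel_left, esymmOn]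
  have newton := newton_inequality_coeff
    (Splits.prod fun i (_ : i ∈ S) ↦ Splits.X_add_C (lam i)) m
  rw [vieta m (k + 2) (by omega), vieta (m + 1) (k + 1) (by omega),
    vieta (m + 2) k (by omega)] at newton
  refine le_of_mul_le_mul_left ?_ (by positivity : (0 : ℝ) < m + 2)
  nlinarith [sq_nonneg (esymmOn S lam (k + 1))]

/-- At the first index `j + 1` with `σ_{j+1}(λ|i) ≤ 0`, expanding `σ_{j+1}(λ) > 0` and
`σ_{j+2}(λ) > 0` along `λ_i` would contradict the log-concavity of `σ(λ|i)`. -/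
theorem esymmOn_erase_pos [DecidableEq ι] {S : Finset ι} {lam : ι → ℝ} {k : ℕ}
    (hlam : ∀ j ≤ k + 1, 0 < esymmOn S lam j) {i : ι} (hi : i ∈ S) :
    ∀ j ≤ k, 0 < esymmOn (S.erase i) lam j := by
  intro j hj
  induction j with
  | zero => simp [esymmOn_zero]
  | succ j ih =>
    have ha := ih (by omega)
    have h1 := hlam (j + 1) (by omega)
    have h2 := hlam (j + 2) (by omega)
    have newton := esymmOn_mul_esymmOn_le_sq (S.erase i) lam j
    rw [← esymmOn_erase_succ_add hi] at h1 h2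
    by_contra! hb
    nlinarith [mul_pos ha h2, mul_nonneg (neg_nonneg.2 hb) h1.le]

theorem antivaryOn_esymmOn_erase [DecidableEq ι] {S : Finset ι} {lam : ι → ℝ} {k : ℕ}
    (hlam : ∀ j ≤ k + 1, 0 < esymmOn S lam j) :
    AntivaryOn lam (fun i ↦ esymmOn (S.erase i) lam k) S := by
  refine antivaryOn_iff_forall_mul_nonpos.2 fun i hi l hl ↦ ?_
  rcases k with _ | k
  · simp [esymmOn_zero]
  rcases eq_or_ne i l with rfl | hil
  · simp
  have expand_l := esymmOn_erase_succ_add (Finset.mem_erase.2 ⟨hil.symm, hl⟩) lam k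
  have expand_i := esymmOn_erase_succ_add (Finset.mem_erase.2 ⟨hil, hi⟩) lam k
  rw [Finset.erase_right_comm] at expand_i
  have hpos := esymmOn_erase_pos (esymmOn_erase_pos hlam hi) (Finset.mem_erase.2 ⟨hil.symm, hl⟩)
    k le_rfl
  rw [← expand_l, ← expand_i]
  nlinarith [mul_nonneg hpos.le (sq_nonneg (lam i - lam l))]

theorem sum_mul_sum_le_of_antivaryOn {S : Finset ι} {w a b : ι → ℝ}
    (hab : AntivaryOn a b S) (hw : ∀ i ∈ S, 0 ≤ w i) :
    (∑ i ∈ S, w i) * ∑ i ∈ S, w i * a i * b i ≤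
      (∑ i ∈ S, w i * a i) * ∑ i ∈ S, w i * b i := by
  have nonpos : ∑ i ∈ S, ∑ l ∈ S, w i * w l * ((a i - a l) * (b i - b l)) ≤ 0 :=
    Finset.sum_nonpos fun i hi ↦ Finset.sum_nonpos fun l hl ↦
      mul_nonpos_of_nonneg_of_nonpos (mul_nonneg (hw i hi) (hw l hl))
        (hab.sub_mul_sub_nonpos hl hi)
  have expand : ∀ i l, w i * w l * ((a i - a l) * (b i - b l)) =
      w l * (w i * a i * b i) + w i * (w l * a l * b l) - w i * a i * (w l * b l) -
        w l * a l * (w i * b i) := fun i l ↦ by ring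
  simp only [expand, Finset.sum_add_distrib, Finset.sum_sub_distrib, ← Finset.mul_sum,
    ← Finset.sum_mul] at nonpos
  linarith

/-- By Chebyshev's sum inequality the `w`-average of `λ_i σ_{k-1}(λ|i)` is nonpositive, so that of
`σ_k(λ|i) = σ_k(λ) - λ_i σ_{k-1}(λ|i)` is at least `σ_k(λ)`. -/
theorem sum_esymmOn_erase_le [DecidableEq ι] {S : Finset ι} {lam w : ι → ℝ} {k : ℕ}
    (hlam : ∀ j ≤ k + 1, 0 < esymmOn S lam j) (hw : ∀ i ∈ S, 0 ≤ w i) (hw_sum : ∑ i ∈ S, w i = 1)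
    (hmean : ∑ i ∈ S, w i * lam i ≤ 0) :
    ∑ i ∈ S, esymmOn (S.erase i) lam k ≤ S.card * ∑ i ∈ S, w i * esymmOn (S.erase i) lam k := by
  rcases k with _ | k
  · simp [esymmOn_zero, hw_sum]
  have hpos := hlam (k + 1) (by omega)
  have sum_le : ∑ i ∈ S, esymmOn (S.erase i) lam (k + 1) ≤ S.card * esymmOn S lam (k + 1) := by
    rw [sum_esymmOn_erase_succ]
    gcongr
    linarith [k.cast_nonneg (α := ℝ)]
  have average : ∑ i ∈ S, w i * esymmOn (S.erase i) lam (k + 1) =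
      esymmOn S lam (k + 1) - ∑ i ∈ S, w i * lam i * esymmOn (S.erase i) lam k := by
    rw [Finset.sum_congr rfl fun i hi ↦ by rw [esymmOn_erase_succ hi]]
    simp only [mul_sub, Finset.sum_sub_distrib, ← Finset.sum_mul, hw_sum, one_mul, mul_assoc]
  have hlam' : ∀ j ≤ k + 1, 0 < esymmOn S lam j := fun j hj ↦ hlam j (by omega)
  have chebyshev := sum_mul_sum_le_of_antivaryOn (antivaryOn_esymmOn_erase hlam') hw
  have average_nonneg : 0 ≤ ∑ i ∈ S, w i * esymmOn (S.erase i) lam k :=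
    Finset.sum_nonneg fun i hi ↦ mul_nonneg (hw i hi) (esymmOn_erase_pos hlam' hi k le_rfl).le
  refine sum_le.trans (mul_le_mul_of_nonneg_left ?_ S.card.cast_nonneg)
  nlinarith [mul_nonneg (neg_nonneg.2 hmean) average_nonneg]

end ElementarySymmetric

section SumMinors

open Matrix

variable {ι R : Type*} [Fintype ι] [DecidableEq ι] [CommRing R]

/-- The sum of the principal `k × k` minors of a square matrix. For a Hermitian matrix this is the
`k`-th elementary symmetric polynomial of the eigenvalues, but it is polynomial in the entries and
can be differentiated without differentiating eigenvalues. -/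
def sumMinors (k : ℕ) (A : Matrix ι ι R) : R :=
  ∑ T ∈ Finset.univ.powersetCard k,
    (A.submatrix (Subtype.val : T → ι) (Subtype.val : T → ι)).det

theorem sumMinors_mul_comm (k : ℕ) (A B : Matrix ι ι R) :
    sumMinors k (A * B) = sumMinors k (B * A) := by
  open Polynomial in
  have sylvester : det (1 + (X : R[X]) • (A * B).map C) = det (1 + (X : R[X]) • (B * A).map C) := by
    rw [Matrix.map_mul, Matrix.map_mul, ← Matrix.smul_mul, det_one_add_mul_comm, Matrix.mul_smul]
  rw [sumMinors, ← coeff_det_one_add_X_smul_eq_sum_minors, sylvester,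
    coeff_det_one_add_X_smul_eq_sum_minors, sumMinors]

theorem sumMinors_diagonal (k : ℕ) (d : ι → R) :
    sumMinors k (diagonal d) = esymmOn Finset.univ d k := by
  refine Finset.sum_congr rfl fun T _ ↦ ?_
  rw [submatrix_diagonal d _ Subtype.val_injective, det_diagonal]
  exact Finset.prod_coe_sort T d

theorem sumMinors_unitary_conj [StarRing R] (k : ℕ) (U : unitaryGroup ι R) (A : Matrix ι ι R) :
    sumMinors k (star (U : Matrix ι ι R) * A * (U : Matrix ι ι R)) = sumMinors k A := by
  rw [sumMinors_mul_comm, ← mul_assoc, mem_unitaryGroup_iff.1 U.2, one_mul]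

end SumMinors

section FirstVariation

open Matrix

variable {ι 𝕜 : Type*} [DecidableEq ι] [NontriviallyNormedField 𝕜]

/-- In the Leibniz expansion only the identity permutation contributes, since any other one moves
at least two indices and so retains an off-diagonal factor after differentiation. -/
theorem hasDerivAt_det_of_eq_diagonal [Fintype ι] {A : 𝕜 → Matrix ι ι 𝕜} {A' : Matrix ι ι 𝕜}
    {d : ι → 𝕜} {t : 𝕜} (hA : A t = diagonal d)
    (hA' : ∀ i j, HasDerivAt (fun s ↦ A s i j) (A' i j) t) :
    HasDerivAt (fun s ↦ (A s).det) (∑ i, A' i i * ∏ j ∈ Finset.univ.erase i, d j) t := by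
  have leibniz : HasDerivAt (fun s ↦ (A s).det) (∑ σ : Equiv.Perm ι,
      ((σ.sign : ℤ) : 𝕜) * ∑ i, (∏ j ∈ Finset.univ.erase i, A t (σ j) j) • A' (σ i) i) t := by
    simp only [det_apply']
    exact HasDerivAt.fun_sum fun σ _ ↦
      (HasDerivAt.fun_finsetProd fun i _ ↦ hA' (σ i) i).const_mul _
  convert leibniz using 1
  rw [Finset.sum_eq_single_of_mem (1 : Equiv.Perm ι) (Finset.mem_univ _)]
  · simp [hA, mul_comm]
  · intro σ _ hσ
    rw [Finset.sum_eq_zero, mul_zero]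
    intro i _
    obtain ⟨j, hj, hji⟩ :=
      Finset.exists_mem_ne (Equiv.Perm.one_lt_card_support_of_ne_one hσ) i
    rw [Finset.prod_eq_zero (Finset.mem_erase.2 ⟨hji, Finset.mem_univ j⟩), zero_smul]
    rw [hA, diagonal_apply_ne _ (Equiv.Perm.mem_support.1 hj)]

theorem hasDerivAt_sumMinors_of_eq_diagonal [Fintype ι] {A : 𝕜 → Matrix ι ι 𝕜}
    {A' : Matrix ι ι 𝕜} {d : ι → 𝕜} {t : 𝕜} (hA : A t = diagonal d)
    (hA' : ∀ i j, HasDerivAt (fun s ↦ A s i j) (A' i j) t) (k : ℕ) :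
    HasDerivAt (fun s ↦ sumMinors (k + 1) (A s))
      (∑ i, A' i i * esymmOn (Finset.univ.erase i) d k) t := by
  rw [sum_mul_esymmOn_erase]
  refine HasDerivAt.fun_sum fun T _ ↦ ?_
  have hT : (A t).submatrix (Subtype.val : T → ι) (Subtype.val : T → ι) =
      diagonal fun i : T ↦ d i := by
    rw [hA, submatrix_diagonal d _ Subtype.val_injective]
    rfl
  refine (hasDerivAt_det_of_eq_diagonal (A := fun s ↦ (A s).submatrix _ _) hT
    fun i j ↦ hA' i j).congr_deriv ?_
  rw [← Finset.sum_coe_sort T]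
  refine Finset.sum_congr rfl fun i _ ↦ ?_
  rw [Finset.univ_eq_attach, Finset.prod_erase_attach]

theorem eigenvectorUnitary_conj_eq_diagonal [Fintype ι] {A : Matrix ι ι ℝ}
    (hA : A.IsHermitian) :
    star (hA.eigenvectorUnitary : Matrix ι ι ℝ) * A * (hA.eigenvectorUnitary : Matrix ι ι ℝ) =
      diagonal hA.eigenvalues := by
  have h := hA.conjStarAlgAut_star_eigenvectorUnitary
  rwa [Unitary.conjStarAlgAut_star_apply] at h

theorem sigmaMat_eq_sumMinors {n : ℕ} {A : Matrix (Fin n) (Fin n) ℝ} (hA : A.IsHermitian) (k : ℕ) :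
    sigmaMat k A = sumMinors k A := by
  rw [← sumMinors_unitary_conj k hA.eigenvectorUnitary, eigenvectorUnitary_conj_eq_diagonal,
    sumMinors_diagonal, sigmaMat, dif_pos hA]
  rfl

theorem hasDerivAt_sigmaMat {n : ℕ} {A : ℝ → Matrix (Fin n) (Fin n) ℝ}
    {A' : Matrix (Fin n) (Fin n) ℝ} {t : ℝ} (hA : ∀ᶠ s in 𝓝 t, (A s).IsHermitian)
    (hA' : ∀ i j, HasDerivAt (fun s ↦ A s i j) (A' i j) t) (k : ℕ) :
    HasDerivAt (fun s ↦ sigmaMat (k + 1) (A s))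
      (∑ i, (⇑(hA.self_of_nhds.eigenvectorBasis i) ⬝ᵥ A' *ᵥ hA.self_of_nhds.eigenvectorBasis i) *
        esymmOn (Finset.univ.erase i) hA.self_of_nhds.eigenvalues k) t := by
  set hAt := hA.self_of_nhds
  set U := hAt.eigenvectorUnitary
  have conj_apply : ∀ (M : Matrix (Fin n) (Fin n) ℝ) i j,
      (star (U : Matrix (Fin n) (Fin n) ℝ) * M * U) i j =
        ⇑(hAt.eigenvectorBasis i) ⬝ᵥ M *ᵥ hAt.eigenvectorBasis j := fun M i j ↦ by
    rw [mul_assoc, mul_apply']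
    rfl
  have conj_deriv : ∀ i j, HasDerivAt
      (fun s ↦ (star (U : Matrix (Fin n) (Fin n) ℝ) * A s * U) i j)
      ((star (U : Matrix (Fin n) (Fin n) ℝ) * A' * U) i j) t := fun i j ↦ by
    simp only [conj_apply, dotProduct, mulVec]
    exact HasDerivAt.fun_sum fun p _ ↦ (HasDerivAt.fun_sum fun q _ ↦
      (hA' p q).mul_const _).const_mul _
  simp only [← conj_apply]
  refine (hasDerivAt_sumMinors_of_eq_diagonal
    (eigenvectorUnitary_conj_eq_diagonal hAt) conj_deriv k).congr_of_eventuallyEq ?_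
  filter_upwards [hA] with s hs
  rw [sumMinors_unitary_conj, sigmaMat_eq_sumMinors hs]

end FirstVariation

section SecondDerivative

/-- `f` is differentiable near `x` with derivative `f'` at `x`, and its derivative is differentiable
at `x` with derivative `f''`. Keeping the derivative near `x` existentially quantified makes the
calculus rules below composable. -/
def HasSecondDerivAt (f : ℝ → ℝ) (f' f'' x : ℝ) : Prop :=
  ∃ g : ℝ → ℝ, (∀ᶠ s in 𝓝 x, HasDerivAt f (g s) s) ∧ g x = f' ∧ HasDerivAt g f'' x

namespace HasSecondDerivAt

variable {f g : ℝ → ℝ} {a a' b b' x : ℝ}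

theorem hasDerivAt (hf : HasSecondDerivAt f a a' x) : HasDerivAt f a x := by
  obtain ⟨df, hdf, rfl, -⟩ := hf
  exact hdf.self_of_nhds

theorem add (hf : HasSecondDerivAt f a a' x) (hg : HasSecondDerivAt g b b' x) :
    HasSecondDerivAt (fun s ↦ f s + g s) (a + b) (a' + b') x := by
  obtain ⟨df, hdf, rfl, hf'⟩ := hf
  obtain ⟨dg, hdg, rfl, hg'⟩ := hg
  exact ⟨fun s ↦ df s + dg s, hdf.mp (hdg.mono fun s hs hs' ↦ hs'.add hs), rfl, hf'.add hg'⟩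

theorem const_mul (c : ℝ) (hf : HasSecondDerivAt f a a' x) :
    HasSecondDerivAt (fun s ↦ c * f s) (c * a) (c * a') x := by
  obtain ⟨df, hdf, rfl, hf'⟩ := hf
  exact ⟨fun s ↦ c * df s, hdf.mono fun s hs ↦ hs.const_mul c, rfl, hf'.const_mul c⟩

theorem sub (hf : HasSecondDerivAt f a a' x) (hg : HasSecondDerivAt g b b' x) :
    HasSecondDerivAt (fun s ↦ f s - g s) (a - b) (a' - b') x := by
  simpa [sub_eq_add_neg] using hf.add (hg.const_mul (-1))

theorem const_sub (c : ℝ) (hf : HasSecondDerivAt f a a' x) :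
    HasSecondDerivAt (fun s ↦ c - f s) (-a) (-a') x := by
  obtain ⟨df, hdf, rfl, hf'⟩ := hf
  exact ⟨fun s ↦ -df s, hdf.mono fun s hs ↦ hs.const_sub c, rfl, hf'.neg⟩

theorem log (hf : HasSecondDerivAt f a a' x) (hx : f x ≠ 0) :
    HasSecondDerivAt (fun s ↦ Real.log (f s)) (a / f x) (a' / f x - (a / f x) ^ 2) x := by
  have hfx := hf.hasDerivAt
  obtain ⟨df, hdf, rfl, hf'⟩ := hf
  refine ⟨fun s ↦ df s / f s, ?_, rfl, ?_⟩
  · filter_upwards [hdf, hfx.continuousAt.eventually_ne hx] with s hs hs'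
    exact hs.log hs'
  · refine (hf'.div hfx hx).congr_deriv ?_
    field_simp

/-- If `f''(x) > 0`, then `x` is also a local minimum, so `f` is locally constant. -/
theorem of_isLocalMax (hf : HasSecondDerivAt f a a' x) (hmax : IsLocalMax f x) :
    a = 0 ∧ a' ≤ 0 := by
  have ha : a = 0 := hmax.hasDerivAt_eq_zero hf.hasDerivAt
  refine ⟨ha, ?_⟩
  have hcont := hf.hasDerivAt.continuousAt
  obtain ⟨df, hdf, hdfx, hdf'⟩ := hf
  have hderiv : deriv f =ᶠ[𝓝 x] df := hdf.mono fun s hs ↦ hs.deriv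
  have hderiv2 : deriv (deriv f) x = a' := by rw [hderiv.deriv_eq, hdf'.deriv]
  by_contra! ha'
  have hmin := isLocalMin_of_deriv_deriv_pos (hderiv2 ▸ ha')
    (by rw [hderiv.self_of_nhds, hdfx, ha]) hcont
  have hconst : f =ᶠ[𝓝 x] fun _ ↦ f x := by
    filter_upwards [hmax, hmin] with s h1 h2
    exact le_antisymm h1 h2
  have hzero := hconst.deriv.deriv_eq
  simp only [deriv_const', hderiv2] at hzero
  exact ha'.ne' hzero

end HasSecondDerivAt

variable {E F : Type*} [NormedAddCommGroup E] [NormedSpace ℝ E] [NormedAddCommGroup F]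
  [NormedSpace ℝ F]

theorem tendsto_add_smul_nhds_zero (x b : E) : Tendsto (fun s : ℝ ↦ x + s • b) (𝓝 0) (𝓝 x) :=
  (by fun_prop : Continuous fun s : ℝ ↦ x + s • b).tendsto' _ _ (by simp)

theorem hasDerivAt_add_smul (x b : E) (s : ℝ) : HasDerivAt (fun s : ℝ ↦ x + s • b) b s := by
  simpa using ((hasDerivAt_id s).smul_const b).const_add x

theorem hasDerivAt_comp_add_smul {f : E → F} {x : E} (hf : DifferentiableAt ℝ f x) (b : E) :
    HasDerivAt (fun s : ℝ ↦ f (x + s • b)) (fderiv ℝ f x b) 0 :=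
  hf.hasFDerivAt.hasLineDerivAt b

theorem hasSecondDerivAt_clm_comp_add_smul {f : E → F} {x : E} (hf : ContDiffAt ℝ 2 f x)
    (L : F →L[ℝ] ℝ) (b : E) :
    HasSecondDerivAt (fun s ↦ L (f (x + s • b))) (L (fderiv ℝ f x b))
      (L (fderiv ℝ (fderiv ℝ f) x b b)) 0 := by
  refine ⟨fun s ↦ L (fderiv ℝ f (x + s • b) b), ?_, by simp, ?_⟩
  · filter_upwards [(tendsto_add_smul_nhds_zero x b).eventually (hf.eventually (by simp))] with s hs
    exact L.hasFDerivAt.comp_hasDerivAt s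
      ((hs.differentiableAt two_ne_zero).hasFDerivAt.comp_hasDerivAt s (hasDerivAt_add_smul x b s))
  · have hdf : DifferentiableAt ℝ (fderiv ℝ f) x :=
      (hf.fderiv_right (m := 1) le_rfl).differentiableAt one_ne_zero
    have hdf' := (hasDerivAt_comp_add_smul hdf b).clm_apply (hasDerivAt_const 0 b)
    exact (L.hasFDerivAt.comp_hasDerivAt 0 hdf').congr_deriv (by simp)

theorem hasSecondDerivAt_norm_add_smul_sub_sq {E : Type*} [NormedAddCommGroup E]
    [InnerProductSpace ℝ E] (x y b : E) :
    HasSecondDerivAt (fun s ↦ ‖x + s • b - y‖ ^ 2) (2 * ⟪x - y, b⟫) (2 * ‖b‖ ^ 2) 0 := by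
  have hline : ∀ s : ℝ, HasDerivAt (fun s : ℝ ↦ x + s • b - y) b s := fun s ↦
    (hasDerivAt_add_smul x b s).sub_const y
  refine ⟨fun s ↦ 2 * ⟪x + s • b - y, b⟫, .of_forall fun s ↦ (hline s).norm_sq, by simp, ?_⟩
  simpa [real_inner_self_eq_norm_sq] using
    ((hline 0).inner ℝ (hasDerivAt_const 0 b)).const_mul 2

theorem hasDerivAt_fderiv_fderiv_comp_add_smul {u : E → ℝ} {x : E} (hu : ContDiffAt ℝ 3 u x)
    (a b c : E) :
    HasDerivAt (fun s : ℝ ↦ fderiv ℝ (fderiv ℝ u) (x + s • a) b c)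
      (fderiv ℝ (fderiv ℝ (fderiv ℝ u)) x a b c) 0 := by
  have hD2 : DifferentiableAt ℝ (fderiv ℝ (fderiv ℝ u)) x :=
    ((hu.fderiv_right (m := 2) le_rfl).fderiv_right (m := 1) le_rfl).differentiableAt one_ne_zero
  have h := ((hasDerivAt_comp_add_smul (F := E →L[ℝ] E →L[ℝ] ℝ) hD2 a).clm_apply
    (hasDerivAt_const 0 b)).clm_apply (hasDerivAt_const 0 c)
  simpa using h

theorem fderiv3_apply_self_comm {u : E → ℝ} {x : E} (hu : ContDiffAt ℝ 3 u x) (b ξ : E) :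
    fderiv ℝ (fderiv ℝ (fderiv ℝ u)) x b b ξ = fderiv ℝ (fderiv ℝ (fderiv ℝ u)) x ξ b b := by
  have hsymm : (fun s : ℝ ↦ fderiv ℝ (fderiv ℝ u) (x + s • b) b ξ) =ᶠ[𝓝 0]
      fun s ↦ fderiv ℝ (fderiv ℝ u) (x + s • b) ξ b := by
    filter_upwards [(tendsto_add_smul_nhds_zero x b).eventually (hu.eventually (by simp))] with s hs
    exact (hs.of_le (by norm_num : (2 : WithTop ℕ∞) ≤ 3)).isSymmSndFDerivAt (by simp) b ξ
  rw [(hasDerivAt_fderiv_fderiv_comp_add_smul hu b b ξ).unique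
    ((hasDerivAt_fderiv_fderiv_comp_add_smul hu b ξ b).congr_of_eventuallyEq hsymm)]
  have hdu : ContDiffAt ℝ 2 (fderiv ℝ u) x := hu.fderiv_right le_rfl
  exact congrArg (· b) (hdu.isSymmSndFDerivAt (by simp) b ξ)

end SecondDerivative

section Hessian

variable {n : ℕ}

theorem bilin_apply_eq_dotProduct_mulVec (B : Euc n →L[ℝ] Euc n →L[ℝ] ℝ) (a b : Euc n) :
    B a b = ⇑a ⬝ᵥ (Matrix.of fun i j ↦
      B (EuclideanSpace.single i 1) (EuclideanSpace.single j 1)).mulVec ⇑b := by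
  have ha := (EuclideanSpace.basisFun (Fin n) ℝ).sum_repr a
  have hb := (EuclideanSpace.basisFun (Fin n) ℝ).sum_repr b
  simp only [EuclideanSpace.basisFun_repr, EuclideanSpace.basisFun_apply] at ha hb
  conv_lhs => rw [← ha, ← hb]
  simp only [map_sum, map_smul, _root_.sum_apply, _root_.smul_apply, smul_eq_mul, dotProduct,
    Matrix.mulVec, Matrix.of_apply, Finset.mul_sum]
  rw [Finset.sum_comm]
  exact Finset.sum_congr rfl fun i _ ↦ Finset.sum_congr rfl fun j _ ↦ by ring

theorem hessian_eq_of_fderiv_fderiv (u : Euc n → ℝ) (x : Euc n) :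
    hessian u x = Matrix.of fun i j ↦
      fderiv ℝ (fderiv ℝ u) x (EuclideanSpace.single i 1) (EuclideanSpace.single j 1) := by
  ext i j
  simp [hessian, iteratedFDeriv_two_apply]

theorem fderiv_fderiv_apply_eq_dotProduct_hessian (u : Euc n → ℝ) (x a b : Euc n) :
    fderiv ℝ (fderiv ℝ u) x a b = ⇑a ⬝ᵥ (hessian u x).mulVec ⇑b := by
  rw [hessian_eq_of_fderiv_fderiv, ← bilin_apply_eq_dotProduct_mulVec]

theorem hessian_isHermitian {u : Euc n → ℝ} {x : Euc n} (hu : ContDiffAt ℝ 2 u x) :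
    (hessian u x).IsHermitian := by
  rw [hessian_eq_of_fderiv_fderiv]
  ext i j
  exact hu.isSymmSndFDerivAt (by simp) _ _

theorem fderiv_fderiv_apply_eigenvectorBasis {u : Euc n → ℝ} {x : Euc n}
    (h : (hessian u x).IsHermitian) (a : Euc n) (i : Fin n) :
    fderiv ℝ (fderiv ℝ u) x a (h.eigenvectorBasis i) =
      h.eigenvalues i * ⟪h.eigenvectorBasis i, a⟫ := by
  rw [fderiv_fderiv_apply_eq_dotProduct_hessian, h.mulVec_eigenvectorBasis, dotProduct_smul,
    smul_eq_mul, EuclideanSpace.inner_eq_star_dotProduct, star_trivial]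

theorem fderiv_fderiv_apply_eigenvectorBasis_self {u : Euc n → ℝ} {x : Euc n}
    (h : (hessian u x).IsHermitian) (i : Fin n) :
    fderiv ℝ (fderiv ℝ u) x (h.eigenvectorBasis i) (h.eigenvectorBasis i) = h.eigenvalues i := by
  rw [fderiv_fderiv_apply_eigenvectorBasis, real_inner_self_eq_norm_sq,
    h.eigenvectorBasis.norm_eq_one, one_pow, mul_one]

theorem sum_inner_sq_mul_eigenvalues {u : Euc n → ℝ} {x : Euc n}
    (h : (hessian u x).IsHermitian) (a : Euc n) :
    ∑ i, ⟪h.eigenvectorBasis i, a⟫ ^ 2 * h.eigenvalues i = fderiv ℝ (fderiv ℝ u) x a a := by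
  conv_rhs => enter [2]; rw [← h.eigenvectorBasis.sum_repr' a]
  simp only [map_sum, map_smul, smul_eq_mul, fderiv_fderiv_apply_eigenvectorBasis]
  exact Finset.sum_congr rfl fun i _ ↦ by ring

/-- Differentiating the equation `σ_{k+1}(D²u) = c` in the direction `a`. -/
theorem sum_fderiv3_mul_esymmOn_eq_zero {u : Euc n → ℝ} {x : Euc n} {k : ℕ} {c : ℝ}
    (hu : ContDiffAt ℝ 3 u x) (hσ : ∀ᶠ z in 𝓝 x, sigmaMat (k + 1) (hessian u z) = c)
    (h : (hessian u x).IsHermitian) (a : Euc n) :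
    ∑ i, fderiv ℝ (fderiv ℝ (fderiv ℝ u)) x a (h.eigenvectorBasis i) (h.eigenvectorBasis i) *
      esymmOn (Finset.univ.erase i) h.eigenvalues k = 0 := by
  have hline := tendsto_add_smul_nhds_zero x a
  have hentries : ∀ i j, HasDerivAt (fun s : ℝ ↦ hessian u (x + s • a) i j)
      (Matrix.of (fun i j ↦ fderiv ℝ (fderiv ℝ (fderiv ℝ u)) x a
        (EuclideanSpace.single i 1) (EuclideanSpace.single j 1)) i j) 0 := fun i j ↦ by
    simp only [hessian_eq_of_fderiv_fderiv, Matrix.of_apply]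
    exact hasDerivAt_fderiv_fderiv_comp_add_smul hu a _ _
  have hsymm : ∀ᶠ s : ℝ in 𝓝 0, (hessian u (x + s • a)).IsHermitian :=
    hline.eventually ((hu.of_le (by norm_num)).eventually (by simp) |>.mono
      fun z hz ↦ hessian_isHermitian hz)
  have hzero := (hasDerivAt_sigmaMat hsymm hentries k).unique
    ((hasDerivAt_const 0 c).congr_of_eventuallyEq (hline.eventually hσ))
  simp only [← bilin_apply_eq_dotProduct_mulVec] at hzero
  convert hzero using 6 <;> simp

end Hessian

section MaximumPrinciple

/-- The cutoff `1 - |x - y|² / R²`, positive exactly on the ball of radius `R > 0` around `y`. -/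
def cutoff {E : Type*} [NormedAddCommGroup E] (y : E) (R : ℝ) (x : E) : ℝ :=
  1 - ‖x - y‖ ^ 2 / R ^ 2

/-- The auxiliary function `log ((∂_ξ u)² ρ² / (M - u))` of the maximum principle argument, where
`ρ` is the cutoff on the ball of radius `R` around `y`. It is written as a sum of logarithms, which
is the form whose derivatives are computed. -/
def logTest {E : Type*} [NormedAddCommGroup E] [NormedSpace ℝ E] (u : E → ℝ) (ξ y : E) (R M : ℝ)
    (x : E) : ℝ :=
  2 * Real.log (fderiv ℝ u x ξ) - Real.log (M - u x) + 2 * Real.log (cutoff y R x)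

variable {E : Type*} [NormedAddCommGroup E]

theorem cutoff_self (y : E) (R : ℝ) : cutoff y R y = 1 := by
  simp [cutoff]

theorem cutoff_le_one (x y : E) (R : ℝ) : cutoff y R x ≤ 1 :=
  sub_le_self _ (by positivity)

theorem cutoff_pos_iff {x y : E} {R : ℝ} (hR : 0 < R) : 0 < cutoff y R x ↔ x ∈ ball y R := by
  rw [cutoff, sub_pos, div_lt_one (by positivity), mem_ball_iff_norm,
    sq_lt_sq₀ (norm_nonneg _) hR.le]

variable [InnerProductSpace ℝ E] {u : E → ℝ} {x y ξ b : E} {R M : ℝ}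

theorem hasSecondDerivAt_cutoff_add_smul (x y b : E) (R : ℝ) :
    HasSecondDerivAt (fun s ↦ cutoff y R (x + s • b)) (-(2 * ⟪x - y, b⟫ / R ^ 2))
      (-(2 * ‖b‖ ^ 2 / R ^ 2)) 0 := by
  have h := ((hasSecondDerivAt_norm_add_smul_sub_sq x y b).const_mul (R ^ 2)⁻¹).const_sub 1
  simpa only [cutoff, div_eq_inv_mul] using h

theorem abs_inner_div_cutoff_le (hR : 0 < R) (hρ : 0 < cutoff y R x) (hb : ‖b‖ = 1) :
    |2 * ⟪x - y, b⟫ / R ^ 2 / cutoff y R x| ≤ 2 / (R * cutoff y R x) := by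
  have hxR : ‖x - y‖ < R := mem_ball_iff_norm.1 ((cutoff_pos_iff hR).1 hρ)
  have hinner : |⟪x - y, b⟫| ≤ R := by
    simpa [hb] using (abs_real_inner_le_norm (x - y) b).trans
      (mul_le_mul_of_nonneg_right hxR.le (norm_nonneg b))
  calc |2 * ⟪x - y, b⟫ / R ^ 2 / cutoff y R x|
      = 2 * |⟪x - y, b⟫| / R ^ 2 / cutoff y R x := by
        rw [abs_div, abs_div, abs_mul, abs_two, abs_of_pos hρ, abs_of_pos (pow_pos hR 2)]
    _ ≤ 2 * R / R ^ 2 / cutoff y R x := by gcongr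
    _ = 2 / (R * cutoff y R x) := by field_simp

theorem logTest_first_second_order (hu : ContDiffAt ℝ 3 u x) (hp : 0 < fderiv ℝ u x ξ)
    (hM : u x < M) (hρ : 0 < cutoff y R x) (hmax : IsLocalMax (logTest u ξ y R M) x) (b : E) :
    fderiv ℝ (fderiv ℝ u) x b ξ / fderiv ℝ u x ξ + fderiv ℝ u x b / (2 * (M - u x)) =
        2 * ⟪x - y, b⟫ / R ^ 2 / cutoff y R x ∧
      fderiv ℝ (fderiv ℝ (fderiv ℝ u)) x ξ b b / fderiv ℝ u x ξ +
          fderiv ℝ (fderiv ℝ u) x b b / (2 * (M - u x)) +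
          2 * (fderiv ℝ u x b / (2 * (M - u x))) ^ 2 ≤
        (fderiv ℝ (fderiv ℝ u) x b ξ / fderiv ℝ u x ξ) ^ 2 +
          2 * ‖b‖ ^ 2 / R ^ 2 / cutoff y R x +
          (2 * ⟪x - y, b⟫ / R ^ 2 / cutoff y R x) ^ 2 := by
  have hW : M - u x ≠ 0 := (sub_pos.2 hM).ne'
  have hdu : HasSecondDerivAt (fun s ↦ fderiv ℝ u (x + s • b) ξ) (fderiv ℝ (fderiv ℝ u) x b ξ)
      (fderiv ℝ (fderiv ℝ (fderiv ℝ u)) x b b ξ) 0 :=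
    hasSecondDerivAt_clm_comp_add_smul (F := E →L[ℝ] ℝ) (hu.fderiv_right le_rfl)
      (ContinuousLinearMap.apply ℝ ℝ ξ) b
  have hu' : HasSecondDerivAt (fun s ↦ u (x + s • b)) (fderiv ℝ u x b)
      (fderiv ℝ (fderiv ℝ u) x b b) 0 :=
    hasSecondDerivAt_clm_comp_add_smul (hu.of_le (by norm_num)) (.id ℝ ℝ) b
  have hline : IsLocalMax (fun s : ℝ ↦ logTest u ξ y R M (x + s • b)) 0 := by
    simpa [IsLocalMax, IsMaxFilter] using (tendsto_add_smul_nhds_zero x b).eventually hmax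
  have htest := (((hdu.log (by simpa using hp.ne')).const_mul 2).sub
    ((hu'.const_sub M).log (by simpa using hW))).add
    (((hasSecondDerivAt_cutoff_add_smul x y b R).log (by simpa using hρ.ne')).const_mul 2)
  obtain ⟨hfirst, hsecond⟩ := htest.of_isLocalMax hline
  simp only [zero_smul, add_zero, fderiv3_apply_self_comm hu] at hfirst hsecond
  have hhalf (c : ℝ) : c / (2 * (M - u x)) = c / (M - u x) / 2 := by rw [mul_comm, div_div]
  simp only [neg_div, neg_sq, hhalf] at hfirst hsecond ⊢
  constructor <;> linarith

theorem fderiv3_div_add_fderiv2_div_add_le (hu : ContDiffAt ℝ 3 u x) (hp : 0 < fderiv ℝ u x ξ)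
    (hM : u x < M) (hR : 0 < R) (hρ : 0 < cutoff y R x) (hmax : IsLocalMax (logTest u ξ y R M) x)
    (hb : ‖b‖ = 1) :
    fderiv ℝ (fderiv ℝ (fderiv ℝ u)) x ξ b b / fderiv ℝ u x ξ +
        fderiv ℝ (fderiv ℝ u) x b b / (2 * (M - u x)) +
        (fderiv ℝ u x b / (2 * (M - u x))) ^ 2 / 2 ≤ 18 / (R * cutoff y R x) ^ 2 := by
  obtain ⟨hfirst, hsecond⟩ := logTest_first_second_order hu hp hM hρ hmax b
  set G := 2 * ⟪x - y, b⟫ / R ^ 2 / cutoff y R x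
  set U := fderiv ℝ u x b / (2 * (M - u x))
  have hG : G ^ 2 ≤ 4 / (R * cutoff y R x) ^ 2 := by
    simpa [div_pow, show (2 : ℝ) ^ 2 = 4 by norm_num] using
      pow_le_pow_left₀ (abs_nonneg G) (abs_inner_div_cutoff_le hR hρ hb) 2
  have hcutoff : 2 * ‖b‖ ^ 2 / R ^ 2 / cutoff y R x ≤ 2 / (R * cutoff y R x) ^ 2 := by
    rw [hb, one_pow, mul_one, div_div, mul_pow]
    gcongr
    nlinarith [cutoff_le_one x y R]
  rw [eq_sub_of_add_eq hfirst] at hsecond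
  have hsq : 4 * (4 / (R * cutoff y R x) ^ 2) + 2 / (R * cutoff y R x) ^ 2 =
      18 / (R * cutoff y R x) ^ 2 := by ring
  nlinarith [sq_nonneg (U + 2 * G)]

theorem fderiv_mul_cutoff_mul_le_of_fderiv2_pos (hu : ContDiffAt ℝ 3 u x) (hξ : ‖ξ‖ = 1)
    (hp : 0 < fderiv ℝ u x ξ) (hM : u x < M) (hR : 0 < R) (hρ : 0 < cutoff y R x)
    (hmax : IsLocalMax (logTest u ξ y R M) x) (hD : 0 < fderiv ℝ (fderiv ℝ u) x ξ ξ) :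
    fderiv ℝ u x ξ * cutoff y R x * R ≤ 4 * (M - u x) := by
  have hfirst := (logTest_first_second_order hu hp hM hρ hmax ξ).1
  have hW : 0 < M - u x := sub_pos.2 hM
  have hle : fderiv ℝ u x ξ / (2 * (M - u x)) ≤ 2 / (R * cutoff y R x) :=
    calc fderiv ℝ u x ξ / (2 * (M - u x))
        ≤ 2 * ⟪x - y, ξ⟫ / R ^ 2 / cutoff y R x := hfirst ▸ le_add_of_nonneg_left (by positivity)
      _ ≤ 2 / (R * cutoff y R x) := (le_abs_self _).trans (abs_inner_div_cutoff_le hR hρ hξ)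
  rw [div_le_div_iff₀ (by positivity) (by positivity)] at hle
  linarith

/-- The second-order condition is tested with the operator `∑ i, c i ∂²/∂(b i)²`, which annihilates
`∂_ξ u`. -/
theorem sq_fderiv_mul_cutoff_mul_le_of_sum {ι : Type*} [Fintype ι] {b : ι → E} {c : ι → ℝ} {N : ℝ}
    (hu : ContDiffAt ℝ 3 u x) (hp : 0 < fderiv ℝ u x ξ)
    (hξ : ∀ a, fderiv ℝ u x a = fderiv ℝ u x ξ * ⟪ξ, a⟫) (hM : u x < M) (hR : 0 < R)
    (hρ : 0 < cutoff y R x) (hmax : IsLocalMax (logTest u ξ y R M) x) (hb : ∀ i, ‖b i‖ = 1)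
    (hc : ∀ i, 0 ≤ c i) (hc_pos : 0 < ∑ i, c i)
    (hD3 : ∑ i, fderiv ℝ (fderiv ℝ (fderiv ℝ u)) x ξ (b i) (b i) * c i = 0)
    (hD2 : 0 ≤ ∑ i, fderiv ℝ (fderiv ℝ u) x (b i) (b i) * c i)
    (hN : ∑ i, c i ≤ N * ∑ i, ⟪ξ, b i⟫ ^ 2 * c i) :
    (fderiv ℝ u x ξ * cutoff y R x * R) ^ 2 ≤ 144 * N * (M - u x) ^ 2 := by
  set p := fderiv ℝ u x ξ
  set ρ := cutoff y R x
  set W := M - u x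
  have hW : 0 < W := sub_pos.2 hM
  have hpoint (i : ι) : fderiv ℝ (fderiv ℝ (fderiv ℝ u)) x ξ (b i) (b i) * c i / p +
      fderiv ℝ (fderiv ℝ u) x (b i) (b i) * c i / (2 * W) +
      (p / (2 * W)) ^ 2 / 2 * (⟪ξ, b i⟫ ^ 2 * c i) ≤ 18 / (R * ρ) ^ 2 * c i := by
    have h := mul_le_mul_of_nonneg_right
      (fderiv3_div_add_fderiv2_div_add_le hu hp hM hR hρ hmax (hb i)) (hc i)
    rw [hξ (b i)] at h
    exact le_of_eq_of_le (by ring) h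
  have hsum := Finset.sum_le_sum fun i (_ : i ∈ Finset.univ) ↦ hpoint i
  simp only [Finset.sum_add_distrib, ← Finset.sum_div, ← Finset.mul_sum, hD3, zero_div,
    zero_add] at hsum
  set T := ∑ i, ⟪ξ, b i⟫ ^ 2 * c i
  have hT : 0 < T := (Finset.sum_nonneg fun i _ ↦ mul_nonneg (sq_nonneg _) (hc i)).lt_of_ne' <| by
    rintro hT
    simp only [T, hT, mul_zero] at hN
    exact hc_pos.not_ge hN
  have hTle : (p / (2 * W)) ^ 2 / 2 * T ≤ 18 / (R * ρ) ^ 2 * N * T :=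
    calc (p / (2 * W)) ^ 2 / 2 * T
        ≤ 18 / (R * ρ) ^ 2 * ∑ i, c i := (le_add_of_nonneg_left (by positivity)).trans hsum
      _ ≤ 18 / (R * ρ) ^ 2 * (N * T) := by gcongr
      _ = 18 / (R * ρ) ^ 2 * N * T := by ring
  have hle := mul_le_mul_of_nonneg_right (le_of_mul_le_mul_right hTle hT)
    (by positivity : 0 ≤ 8 * W ^ 2 * (R * ρ) ^ 2)
  field_simp at hle
  linarith

theorem logTest_eq_log (hp : fderiv ℝ u x ξ ≠ 0) (hM : u x < M) (hρ : cutoff y R x ≠ 0) :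
    logTest u ξ y R M x = Real.log ((fderiv ℝ u x ξ * cutoff y R x) ^ 2 / (M - u x)) := by
  rw [Real.log_div (pow_ne_zero 2 (mul_ne_zero hp hρ)) (sub_pos.2 hM).ne', Real.log_pow,
    Real.log_mul hp hρ, logTest]
  push_cast
  ring

/-- Freezing `ξ` at the gradient direction of the maximum point replaces `|Du|` by `∂_ξ u`, which is
no larger and agrees with it at that point. -/
theorem isLocalMax_logTest (hu : ContDiffAt ℝ 1 u x) (hξ : ‖ξ‖ = 1)
    (hgrad : fderiv ℝ u x ξ = ‖fderiv ℝ u x‖) (hp : 0 < ‖fderiv ℝ u x‖) (hM : u x < M)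
    (hR : 0 < R) (hx : x ∈ ball y R)
    (hmax : IsMaxOn (fun z ↦ (‖fderiv ℝ u z‖ * cutoff y R z) ^ 2 / (M - u z)) (ball y R) x) :
    IsLocalMax (logTest u ξ y R M) x := by
  have hdu : ContinuousAt (fun z ↦ fderiv ℝ u z ξ) x :=
    (hu.fderiv_right (m := 0) le_rfl).continuousAt.clm_apply continuousAt_const
  filter_upwards [hdu.eventually (lt_mem_nhds (hgrad ▸ hp)),
    hu.continuousAt.eventually (gt_mem_nhds hM), isOpen_ball.mem_nhds hx] with z hpz hMz hz
  have hρ : 0 < cutoff y R x := (cutoff_pos_iff hR).2 hx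
  have hρz : 0 < cutoff y R z := (cutoff_pos_iff hR).2 hz
  have hW : 0 < M - u z := sub_pos.2 hMz
  have hnorm : fderiv ℝ u z ξ ≤ ‖fderiv ℝ u z‖ := by
    simpa [hξ] using (le_abs_self _).trans ((fderiv ℝ u z).le_opNorm ξ)
  rw [logTest_eq_log hpz.ne' hMz hρz.ne', logTest_eq_log (hgrad ▸ hp.ne') hM hρ.ne', hgrad]
  refine Real.log_le_log (by positivity) (le_trans ?_ (hmax hz))
  dsimp only
  gcongr

theorem exists_isMaxOn_sq_norm_fderiv_mul_cutoff [ProperSpace E] {r : ℝ} (hR : 0 < R) (hRr : R < r)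
    (hu : ContDiffOn ℝ 1 u (ball y r)) (hM : ∀ x ∈ ball y r, u x < M) (hy : fderiv ℝ u y ≠ 0) :
    ∃ x ∈ ball y R, fderiv ℝ u x ≠ 0 ∧
      IsMaxOn (fun z ↦ (‖fderiv ℝ u z‖ * cutoff y R z) ^ 2 / (M - u z)) (ball y R) x := by
  have hsub : closedBall y R ⊆ ball y r := closedBall_subset_ball hRr
  have hyR : y ∈ closedBall y R := mem_closedBall_self hR.le
  have hdu : ContinuousOn (fderiv ℝ u) (closedBall y R) :=
    (hu.continuousOn_fderiv_of_isOpen isOpen_ball le_rfl).mono hsub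
  have hcutoff : Continuous (cutoff y R) := by unfold cutoff; fun_prop
  have hcont : ContinuousOn (fun z ↦ (‖fderiv ℝ u z‖ * cutoff y R z) ^ 2 / (M - u z))
      (closedBall y R) :=
    ((hdu.norm.mul hcutoff.continuousOn).pow 2).div
      (continuousOn_const.sub (hu.continuousOn.mono hsub))
      fun z hz ↦ (sub_pos.2 (hM z (hsub hz))).ne'
  obtain ⟨x, hx, hmax⟩ := (isCompact_closedBall y R).exists_isMaxOn ⟨y, hyR⟩ hcont
  have hpos : 0 < (‖fderiv ℝ u x‖ * cutoff y R x) ^ 2 / (M - u x) := by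
    refine lt_of_lt_of_le ?_ (hmax hyR)
    have := sub_pos.2 (hM y (hsub hyR))
    have := norm_pos_iff.2 hy
    simp only [cutoff_self]
    positivity
  have hne : ‖fderiv ℝ u x‖ * cutoff y R x ≠ 0 := by
    rintro h
    simp [h] at hpos
  refine ⟨x, ?_, norm_ne_zero_iff.1 (left_ne_zero_of_mul hne),
    hmax.on_subset ball_subset_closedBall⟩
  refine (cutoff_pos_iff hR).1 ((right_ne_zero_of_mul hne).symm.lt_of_le ?_)
  rw [cutoff, sub_nonneg, div_le_one (by positivity)]
  exact pow_le_pow_left₀ (norm_nonneg _) (mem_closedBall_iff_norm.1 hx) 2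

theorem exists_norm_eq_one_forall_apply_eq_norm_mul_inner [CompleteSpace E] {ℓ : E →L[ℝ] ℝ}
    (hℓ : ℓ ≠ 0) : ∃ ξ : E, ‖ξ‖ = 1 ∧ ∀ a, ℓ a = ‖ℓ‖ * ⟪ξ, a⟫ := by
  set v := (InnerProductSpace.toDual ℝ E).symm ℓ with hv
  have hnorm : ‖v‖ = ‖ℓ‖ := LinearIsometryEquiv.norm_map _ _
  have hv0 : v ≠ 0 := by simpa [hv] using hℓ
  refine ⟨‖v‖⁻¹ • v, norm_smul_inv_norm hv0, fun a ↦ ?_⟩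
  rw [real_inner_smul_left, ← hnorm, mul_inv_cancel_left₀ (norm_ne_zero_iff.2 hv0), hv,
    InnerProductSpace.toDual_symm_apply]

end MaximumPrinciple

section GradientEstimate

variable {n k : ℕ} {u : Euc n → ℝ}

theorem esymmOn_pos_of_inGardingCone {A : Matrix (Fin n) (Fin n) ℝ} (hA : InGardingCone k A)
    (h : A.IsHermitian) {j : ℕ} (hj : j ≤ k) : 0 < esymmOn Finset.univ h.eigenvalues j := by
  rcases j.eq_zero_or_pos with rfl | hj0
  · simp [esymmOn_zero]
  · obtain ⟨_, hpos⟩ := hA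
    exact hpos j hj0 hj

/-- When `∂²u/∂ξ² ≤ 0`, the linearized operator in an eigenbasis of the Hessian is used: its
coefficient in the direction `ξ` is comparable to its trace. -/
theorem sq_fderiv_mul_cutoff_mul_le_of_isLocalMax_logTest {x y ξ : Euc n} {R M c : ℝ}
    (hu : ContDiffAt ℝ 3 u x) (hcone : InGardingCone (k + 1) (hessian u x))
    (hσ : ∀ᶠ z in 𝓝 x, sigmaMat (k + 1) (hessian u z) = c) (hξ : ‖ξ‖ = 1)
    (hp : 0 < fderiv ℝ u x ξ) (hgrad : ∀ a, fderiv ℝ u x a = fderiv ℝ u x ξ * ⟪ξ, a⟫)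
    (hM : u x < M) (hR : 0 < R) (hρ : 0 < cutoff y R x)
    (hmax : IsLocalMax (logTest u ξ y R M) x) :
    (fderiv ℝ u x ξ * cutoff y R x * R) ^ 2 ≤ 144 * n * (M - u x) ^ 2 := by
  have : Nontrivial (Euc n) := ⟨ξ, 0, norm_ne_zero_iff.1 (by simp [hξ])⟩
  have : Nonempty (Fin n) := not_isEmpty_iff.1 fun _ ↦ not_subsingleton (Euc n) inferInstance
  have hn : (1 : ℝ) ≤ n := by exact_mod_cast Fin.pos_iff_nonempty.2 this
  rcases lt_or_ge 0 (fderiv ℝ (fderiv ℝ u) x ξ ξ) with hD | hD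
  · have hle := fderiv_mul_cutoff_mul_le_of_fderiv2_pos hu hξ hp hM hR hρ hmax hD
    calc (fderiv ℝ u x ξ * cutoff y R x * R) ^ 2
        ≤ (4 * (M - u x)) ^ 2 := by gcongr
      _ ≤ 144 * n * (M - u x) ^ 2 := by nlinarith [sq_nonneg (M - u x)]
  · have h : (hessian u x).IsHermitian := hessian_isHermitian (hu.of_le (by norm_num))
    have hpos (j : ℕ) (hj : j ≤ k + 1) := esymmOn_pos_of_inGardingCone hcone h hj
    have hcoeff (i : Fin n) : 0 < esymmOn (Finset.univ.erase i) h.eigenvalues k :=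
      esymmOn_erase_pos hpos (Finset.mem_univ i) k le_rfl
    have hinner : ∑ i, ⟪h.eigenvectorBasis i, ξ⟫ ^ 2 = 1 := by
      simpa [hξ] using h.eigenvectorBasis.sum_sq_norm_inner_right ξ
    refine sq_fderiv_mul_cutoff_mul_le_of_sum hu hp hgrad hM hR hρ hmax
      h.eigenvectorBasis.norm_eq_one (fun i ↦ (hcoeff i).le)
      (Finset.sum_pos (fun i _ ↦ hcoeff i) Finset.univ_nonempty)
      (sum_fderiv3_mul_esymmOn_eq_zero hu hσ h ξ) ?_ ?_
    · simp only [fderiv_fderiv_apply_eigenvectorBasis_self, sum_self_mul_esymmOn_erase]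
      have := hpos (k + 1) le_rfl
      positivity
    · simpa [real_inner_comm ξ] using sum_esymmOn_erase_le hpos (fun i _ ↦ sq_nonneg _) hinner
        ((sum_inner_sq_mul_eigenvalues h ξ).trans_le hD)

theorem sq_norm_fderiv_mul_cutoff_mul_le_of_isMaxOn {x y : Euc n} {R M c : ℝ}
    (hu : ContDiffAt ℝ 3 u x) (hcone : InGardingCone (k + 1) (hessian u x))
    (hσ : ∀ᶠ z in 𝓝 x, sigmaMat (k + 1) (hessian u z) = c) (hM : u x < M) (hR : 0 < R)
    (hx : x ∈ ball y R) (hx0 : fderiv ℝ u x ≠ 0)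
    (hmax : IsMaxOn (fun z ↦ (‖fderiv ℝ u z‖ * cutoff y R z) ^ 2 / (M - u z)) (ball y R) x) :
    (‖fderiv ℝ u x‖ * cutoff y R x * R) ^ 2 ≤ 144 * n * (M - u x) ^ 2 := by
  obtain ⟨ξ, hξ, hgrad⟩ := exists_norm_eq_one_forall_apply_eq_norm_mul_inner hx0
  have hp : fderiv ℝ u x ξ = ‖fderiv ℝ u x‖ := by simp [hgrad ξ, hξ]
  have hp0 : 0 < ‖fderiv ℝ u x‖ := norm_pos_iff.2 hx0
  have hlocal := isLocalMax_logTest (hu.of_le (by norm_num)) hξ hp hp0 hM hR hx hmax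
  rw [← hp] at hgrad hp0 ⊢
  exact sq_fderiv_mul_cutoff_mul_le_of_isLocalMax_logTest hu hcone hσ hξ hp0 hgrad hM hR
    ((cutoff_pos_iff hR).2 hx) hlocal

variable {y : Euc n} {r s c : ℝ}

theorem norm_fderiv_le_of_lt {R M : ℝ} (hu : ContDiffOn ℝ 3 u (ball y r))
    (hcone : ∀ x ∈ ball y r, InGardingCone (k + 1) (hessian u x))
    (hσ : ∀ x ∈ ball y r, sigmaMat (k + 1) (hessian u x) = c) (hs : ∀ x ∈ ball y r, s ≤ u x)
    (hM : ∀ x ∈ ball y r, u x < M) (hR : 0 < R) (hRr : R < r) :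
    ‖fderiv ℝ u y‖ ≤ 12 * √n / R * (M - s) := by
  have hy : y ∈ ball y r := mem_ball_self (hR.trans hRr)
  have hWy : 0 < M - u y := sub_pos.2 (hM y hy)
  have hMy : M - u y ≤ M - s := sub_le_sub_left (hs y hy) M
  have hMs : 0 < M - s := hWy.trans_le hMy
  rcases eq_or_ne (fderiv ℝ u y) 0 with hy0 | hy0
  · rw [hy0, norm_zero]
    positivity
  obtain ⟨x, hxR, hx0, hmax⟩ :=
    exists_isMaxOn_sq_norm_fderiv_mul_cutoff hR hRr (hu.of_le (by norm_num)) hM hy0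
  have hx : x ∈ ball y r := ball_subset_ball hRr.le hxR
  have hnhds : ball y r ∈ 𝓝 x := isOpen_ball.mem_nhds hx
  have hWx : 0 < M - u x := sub_pos.2 (hM x hx)
  have hest := sq_norm_fderiv_mul_cutoff_mul_le_of_isMaxOn (hu.contDiffAt hnhds) (hcone x hx)
    (eventually_of_mem hnhds hσ) (hM x hx) hR hxR hx0 hmax
  have hquot : ‖fderiv ℝ u y‖ ^ 2 / (M - u y) ≤ 144 * n * (M - s) / R ^ 2 :=
    calc ‖fderiv ℝ u y‖ ^ 2 / (M - u y)
        ≤ (‖fderiv ℝ u x‖ * cutoff y R x) ^ 2 / (M - u x) := by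
          simpa [cutoff_self] using hmax (mem_ball_self hR)
      _ ≤ 144 * n * (M - u x) / R ^ 2 := by
          rw [div_le_div_iff₀ hWx (by positivity)]
          linarith
      _ ≤ 144 * n * (M - s) / R ^ 2 := by gcongr; exact hs x hx
  refine le_of_sq_le_sq ?_ (by positivity)
  calc ‖fderiv ℝ u y‖ ^ 2
      ≤ 144 * n * (M - s) / R ^ 2 * (M - u y) := (div_le_iff₀ hWy).1 hquot
    _ ≤ 144 * n * (M - s) / R ^ 2 * (M - s) := by gcongr
    _ = (12 * √n / R * (M - s)) ^ 2 := by
        rw [mul_pow, div_pow, mul_pow, Real.sq_sqrt n.cast_nonneg]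
        ring

theorem statement6_general {t : ℝ} (hk : 1 ≤ k) (hr : 0 < r) (hu : ContDiffOn ℝ 3 u (ball y r))
    (hcone : ∀ x ∈ ball y r, InGardingCone k (hessian u x))
    (hσ : ∀ x ∈ ball y r, sigmaMat k (hessian u x) = c)
    (hst : ∀ x ∈ ball y r, s ≤ u x ∧ u x ≤ t) :
    ‖fderiv ℝ u y‖ ≤ 12 * √n / r * (t - s) := by
  obtain ⟨k, rfl⟩ := Nat.exists_eq_add_of_le' hk
  have hlim : Tendsto (fun ε : ℝ ↦ 12 * √n / (r - ε) * (t + ε - s)) (𝓝[>] 0)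
      (𝓝 (12 * √n / r * (t - s))) := by
    have hcont : ContinuousAt (fun ε : ℝ ↦ 12 * √n / (r - ε) * (t + ε - s)) 0 := by
      fun_prop (disch := simpa using hr.ne')
    simpa using hcont.tendsto.mono_left nhdsWithin_le_nhds
  refine ge_of_tendsto hlim ?_
  filter_upwards [Ioo_mem_nhdsGT hr] with ε hε
  exact norm_fderiv_le_of_lt hu hcone hσ (fun x hx ↦ (hst x hx).1)
    (fun x hx ↦ (hst x hx).2.trans_lt (lt_add_of_pos_right t hε.1)) (sub_pos.2 hε.2)
    (sub_lt_self r hε.1)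

end GradientEstimate

/-- interior gradient estimate `|Du(y)| ≤ (C/r)·osc_B u`. -/
theorem statement6 {n k : ℕ} (hk : 1 ≤ k) (hkn : k ≤ n) :
    ∃ C : ℝ, 0 < C ∧ ∀ (y : Euc n) (r : ℝ), 0 < r → ∀ u : Euc n → ℝ,
      ContDiffOn ℝ 3 u (ball y r) →
      (∀ x ∈ ball y r, InGardingCone k (hessian u x)) →
      (∀ x ∈ ball y r, sigmaMat k (hessian u x) = 1) →
      ∀ s t : ℝ, (∀ x ∈ ball y r, s ≤ u x ∧ u x ≤ t) →
        ‖fderiv ℝ u y‖ ≤ C / r * (t - s) := by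
  have hn : (0 : ℝ) < n := by exact_mod_cast hk.trans hkn
  exact ⟨12 * √n, by positivity, fun y r hr u hu hcone hσ s t hst ↦
    statement6_general hk hr hu hcone hσ hst⟩
end
end

section
/- Let M > M₁(Ω₁) and for ε ∈ (0, ε₀) let u^ε be the strictly k-convex solution of problem (2.1). For δ > 0, set U_δ = {x ∈ Ω^ε : dist(x, ∂Ω₁) < δ}. Then for every sufficiently small δ > 0 (small enough that U_δ stays away from B̄_{ε₀}(0)) there exists a constant C = C(δ) > 0, depending on δ, n, k, Ω₁ and M but independent of ε, such that |Du^ε| ≤ C in U_δ. -/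
open Set Metric Filter Topology Bornology
open scoped RealInnerProductSpace

noncomputable section

/-!
The equation is invariant under rotations and under `u ↦ l⁻² u(l ·)`, so `u` can be compared with
its transform under the rotation and dilation carrying `x` to `y`. On the boundary of the common
domain the two functions differ by `O(|x - y| / |x|)`: at `∂Ω₁` because `Kψ ≤ u ≤ 0` for some
large `K`, and at the hole because the radial subsolution gives `-M ≤ u` and a superharmonic
function of `|x| / ε` bounds `u` from above, with constants that scale invariance makes uniform in
`ε`. Since `σ_k` is monotone on `Γ_k`, the comparison principle spreads this bound to the interior,
so that `|u(x) - u(y)| ≤ C |x - y| / |x|` and `|Du(x)| ≤ C / |x|`.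
-/

/-! ### Real-rooted polynomials -/

section RealRooted

open Polynomial

theorem splits_derivative_s7 {p : ℝ[X]} (hp : p.Splits) : p.derivative.Splits := by
  rcases eq_or_ne p.natDegree 0 with h0 | h0
  · rw [derivative_of_natDegree_zero h0]
    exact Splits.zero
  · have hroots := card_roots_le_derivative p
    have hcard := splits_iff_card_roots.1 hp
    have hdeg := natDegree_derivative_lt h0
    have hle := card_roots' p.derivative
    rw [splits_iff_card_roots]
    lia

theorem laguerre_inequality {K : Type*} [Field K] [LinearOrder K] [IsStrictOrderedRing K]
    {p : K[X]} (hp : p.Splits) (x : K) :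
    p.eval x * p.derivative.derivative.eval x ≤ p.derivative.eval x ^ 2 := by
  rw [hp.eq_prod_roots]
  induction p.roots using Multiset.induction_on with
  | empty => simp
  | cons a s ih =>
    set q := C p.leadingCoeff * (s.map fun a ↦ X - C a).prod
    have hcons : C p.leadingCoeff * ((a ::ₘ s).map fun a ↦ X - C a).prod = (X - C a) * q := by
      rw [Multiset.map_cons, Multiset.prod_cons, mul_left_comm]
    simp only [hcons, derivative_mul, derivative_sub, derivative_X, derivative_C, sub_zero,
      one_mul, derivative_add, eval_add, eval_mul, eval_sub, eval_X, eval_C]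
    nlinarith [mul_nonneg (sq_nonneg (x - a)) (sub_nonneg.2 ih), sq_nonneg (q.eval x)]

theorem newton_inequality {p : ℝ[X]} (hp : p.Splits) (j : ℕ) :
    (j + 2) * (p.coeff j * p.coeff (j + 2)) ≤ (j + 1) * p.coeff (j + 1) ^ 2 := by
  induction j generalizing p with
  | zero =>
    have h := laguerre_inequality hp 0
    simp only [← coeff_zero_eq_eval_zero, coeff_derivative] at h
    norm_num at h ⊢
    linarith
  | succ j ih =>
    have h := ih (splits_derivative_s7 hp)
    simp only [coeff_derivative] at h
    push_cast at h ⊢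
    refine le_of_mul_le_mul_left ?_ (by positivity : (0 : ℝ) < (j + 1) * (j + 2))
    linear_combination h

theorem coeff_mul_coeff_add_two_le_sq {p : ℝ[X]} (hp : p.Splits) (j : ℕ) :
    p.coeff j * p.coeff (j + 2) ≤ p.coeff (j + 1) ^ 2 := by
  rcases le_or_gt (p.coeff j * p.coeff (j + 2)) 0 with h | h
  · exact h.trans (sq_nonneg _)
  · nlinarith [newton_inequality hp j, (Nat.cast_nonneg j : (0 : ℝ) ≤ j)]

theorem coeff_pos_of_coeff_one_add_C_mul_X_mul_pos {q : ℝ[X]} {l : ℝ} {k : ℕ} (hq : q.Splits)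
    (hq₀ : 0 < q.coeff 0) (hpos : ∀ j, 1 ≤ j → j ≤ k → 0 < ((1 + C l * X) * q).coeff j) :
    ∀ j < k, 0 < q.coeff j := by
  have hcoeff (j : ℕ) : ((1 + C l * X) * q).coeff (j + 1) = q.coeff (j + 1) + l * q.coeff j := by
    rw [add_mul, one_mul, mul_assoc, coeff_add, coeff_C_mul, coeff_X_mul]
  intro j
  induction j with
  | zero => exact fun _ ↦ hq₀
  | succ j ih =>
    intro hj
    have hqj := ih (by lia)
    have h₁ := hpos (j + 1) (by lia) (by lia)
    have h₂ := hpos (j + 2) (by lia) (by lia)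
    rw [hcoeff] at h₁ h₂
    by_contra! hneg
    -- `q_j (q_{j+2} + l q_{j+1}) ≤ q_{j+1}² + l q_j q_{j+1} = q_{j+1} (q_{j+1} + l q_j)`
    nlinarith [coeff_mul_coeff_add_two_le_sq hq j, mul_pos hqj h₂,
      mul_nonneg (neg_nonneg.2 hneg) h₁.le]

end RealRooted

/-! ### The generating polynomial of the `σ_k` -/

section SigmaPoly

open Polynomial Matrix

variable {ι R : Type*} [Fintype ι] [DecidableEq ι] [CommRing R]

/-- The generating polynomial `det (1 + t A) = ∑ₖ σ_k(A) tᵏ` of the elementary symmetric functions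
of the eigenvalues of `A`; its coefficients make sense over any commutative ring. -/
def sigmaPoly (A : Matrix ι ι R) : R[X] :=
  (1 + (X : R[X]) • A.map C).det

theorem sigmaPoly_mul_mul_of_mul_eq_one (A : Matrix ι ι R) {U V : Matrix ι ι R} (h : U * V = 1) :
    sigmaPoly (U * A * V) = sigmaPoly A := by
  have hmap : U.map C * V.map C = (1 : Matrix ι ι R[X]) := by
    rw [← Matrix.map_mul, h, Matrix.map_one C C_0 C_1]
  have hfactor : 1 + (X : R[X]) • (U * A * V).map C =
      U.map C * (1 + (X : R[X]) • A.map C) * V.map C := by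
    rw [Matrix.mul_add, Matrix.add_mul, Matrix.mul_one, hmap, Matrix.map_mul, Matrix.map_mul,
      Matrix.mul_smul, Matrix.smul_mul]
  rw [sigmaPoly, hfactor, det_mul, det_mul, mul_right_comm, ← det_mul, hmap, det_one, one_mul,
    sigmaPoly]

theorem sigmaPoly_diagonal (l : ι → R) : sigmaPoly (diagonal l) = ∏ i, (1 + C (l i) * X) := by
  rw [sigmaPoly, diagonal_map C_0, ← diagonal_smul, ← diagonal_one, diagonal_add, det_diagonal]
  exact Finset.prod_congr rfl fun i _ ↦ by rw [Pi.smul_apply, smul_eq_mul, mul_comm]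

theorem sigmaPoly_smul (c : R) (A : Matrix ι ι R) :
    sigmaPoly (c • A) = (sigmaPoly A).comp (C c * X) := by
  rw [sigmaPoly, sigmaPoly, ← coe_compRingHom_apply, RingHom.map_det]
  congr 1
  ext1 i j
  simp only [Matrix.add_apply, Matrix.smul_apply, map_apply, RingHom.mapMatrix_apply, map_add,
    map_mul, smul_eq_mul, coe_compRingHom_apply, X_comp, C_comp, Matrix.one_apply,
    apply_ite (comp · (C c * X)), one_comp, zero_comp]
  ring

theorem coeff_one_sigmaPoly (A : Matrix ι ι R) : (sigmaPoly A).coeff 1 = A.trace :=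
  coeff_det_one_add_X_smul_one A

theorem det_diagonal_add_vecMulVec {K : Type*} [Field K] {d : ι → K} (hd : ∀ i, d i ≠ 0)
    (u v : ι → K) :
    (diagonal d + vecMulVec u v).det =
      ∏ i, d i + ∑ i, u i * v i * ∏ j ∈ Finset.univ.erase i, d j := by
  have hinv : (diagonal d)⁻¹ = diagonal fun i ↦ (d i)⁻¹ :=
    inv_eq_right_inv <| by
      rw [diagonal_mul_diagonal, ← diagonal_one]
      exact congrArg diagonal (funext fun i ↦ mul_inv_cancel₀ (hd i))
  have hunit : IsUnit (diagonal d).det := by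
    rw [det_diagonal, isUnit_iff_ne_zero, Finset.prod_ne_zero_iff]
    exact fun i _ ↦ hd i
  rw [vecMulVec_eq Unit, det_add_replicateCol_mul_replicateRow hunit, det_diagonal, hinv,
    det_unique, Matrix.add_apply, one_apply_eq, Matrix.mul_apply, mul_add, mul_one,
    Finset.mul_sum]
  refine congrArg _ (Finset.sum_congr rfl fun i _ ↦ ?_)
  rw [mul_diagonal, replicateRow_apply, replicateCol_apply,
    ← Finset.mul_prod_erase Finset.univ d (Finset.mem_univ i)]
  field [hd i]

theorem sigmaPoly_diagonal_add_vecMulVec {K : Type*} [Field K] (l u v : ι → K) :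
    sigmaPoly (diagonal l + vecMulVec u v) = sigmaPoly (diagonal l) +
      ∑ i, C (u i * v i) * X * ∏ j ∈ Finset.univ.erase i, (1 + C (l j) * X) := by
  let φ := algebraMap K[X] (FractionRing K[X])
  have hφ : Function.Injective φ := IsFractionRing.injective K[X] (FractionRing K[X])
  have hne (i : ι) : φ (1 + C (l i) * X) ≠ 0 := by
    rw [map_ne_zero_iff φ hφ]
    exact fun h ↦ one_ne_zero (α := K) (by simpa using congrArg (eval 0) h)
  have hmap : φ.mapMatrix (1 + (X : K[X]) • (diagonal l + vecMulVec u v).map C) =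
      diagonal (fun i ↦ φ (1 + C (l i) * X)) +
        vecMulVec (fun i ↦ φ (C (u i) * X)) (fun i ↦ φ (C (v i))) := by
    ext i j
    rcases eq_or_ne i j with rfl | hij
    · simp only [RingHom.mapMatrix_apply, map_apply, Matrix.add_apply, one_apply_eq,
        Matrix.smul_apply, diagonal_apply_eq, vecMulVec_apply, map_add, map_mul, smul_eq_mul,
        map_one]
      ring
    · simp only [RingHom.mapMatrix_apply, map_apply, Matrix.add_apply, one_apply_ne hij,
        Matrix.smul_apply, diagonal_apply_ne _ hij, vecMulVec_apply, zero_add, map_mul,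
        smul_eq_mul]
      ring
  apply hφ
  rw [sigmaPoly_diagonal, sigmaPoly, RingHom.map_det, hmap, det_diagonal_add_vecMulVec hne]
  simp only [map_add, map_prod, map_sum, map_mul]
  refine congrArg _ (Finset.sum_congr rfl fun i _ ↦ ?_)
  ring

end SigmaPoly

/-! ### The Gårding cone -/

section GardingCone

open Polynomial Matrix

variable {n k : ℕ} {A B : Matrix (Fin n) (Fin n) ℝ}

theorem eq_eigenvectorUnitary_mul_diagonal_mul_transpose (hA : A.IsHermitian) :
    A = (hA.eigenvectorUnitary : Matrix (Fin n) (Fin n) ℝ) * diagonal hA.eigenvalues *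
      (hA.eigenvectorUnitary : Matrix (Fin n) (Fin n) ℝ)ᵀ := by
  conv_lhs => rw [hA.spectral_theorem, Unitary.conjStarAlgAut_apply]
  rfl

theorem eigenvectorUnitary_mul_transpose (hA : A.IsHermitian) :
    (hA.eigenvectorUnitary : Matrix (Fin n) (Fin n) ℝ) *
      (hA.eigenvectorUnitary : Matrix (Fin n) (Fin n) ℝ)ᵀ = 1 :=
  Unitary.coe_mul_star_self _

theorem sigmaPoly_eq_sigmaPoly_diagonal_eigenvalues (hA : A.IsHermitian) :
    sigmaPoly A = sigmaPoly (diagonal hA.eigenvalues) := by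
  conv_lhs => rw [eq_eigenvectorUnitary_mul_diagonal_mul_transpose hA]
  exact sigmaPoly_mul_mul_of_mul_eq_one _ (eigenvectorUnitary_mul_transpose hA)

theorem coeff_sigmaPoly_diagonal (k : ℕ) (l : Fin n → ℝ) :
    (sigmaPoly (diagonal l)).coeff k = esymmVec k l := by
  rw [sigmaPoly_diagonal, Finset.prod_one_add, finsetSum_coeff, esymmVec,
    Finset.powersetCard_eq_filter, Finset.sum_filter]
  refine Finset.sum_congr rfl fun s _ ↦ ?_
  rw [Finset.prod_mul_distrib, Finset.prod_const, ← map_prod, coeff_C_mul, coeff_X_pow,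
    mul_ite, mul_one, mul_zero]
  exact if_congr eq_comm rfl rfl

theorem esymmVec_eigenvalues (hA : A.IsHermitian) (k : ℕ) :
    esymmVec k hA.eigenvalues = (sigmaPoly A).coeff k := by
  rw [sigmaPoly_eq_sigmaPoly_diagonal_eigenvalues hA, coeff_sigmaPoly_diagonal]

theorem sigmaMat_eq_coeff_sigmaPoly (hA : A.IsHermitian) (k : ℕ) :
    sigmaMat k A = (sigmaPoly A).coeff k := by
  rw [sigmaMat, dif_pos hA, esymmVec_eigenvalues]

theorem inGardingCone_iff :
    InGardingCone k A ↔ A.IsHermitian ∧ ∀ j, 1 ≤ j → j ≤ k → 0 < sigmaMat j A := by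
  refine ⟨fun ⟨h, hpos⟩ ↦ ⟨h, fun j hj hjk ↦ ?_⟩, fun ⟨h, hpos⟩ ↦ ⟨h, fun j hj hjk ↦ ?_⟩⟩
  · rw [sigmaMat, dif_pos h]
    exact hpos j hj hjk
  · simpa only [sigmaMat, dif_pos h] using hpos j hj hjk

theorem isHermitian_vecMulVec_self (v : Fin n → ℝ) : (vecMulVec v v).IsHermitian := by
  rw [IsHermitian, conjTranspose_eq_transpose_of_trivial, transpose_vecMulVec]

theorem sigmaMat_smul (hA : A.IsHermitian) (c : ℝ) : sigmaMat k (c • A) = c ^ k * sigmaMat k A := by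
  rw [sigmaMat_eq_coeff_sigmaPoly hA, sigmaMat_eq_coeff_sigmaPoly (hA.smul (.all c)),
    sigmaPoly_smul, comp_C_mul_X_coeff, mul_comm]

theorem sigmaMat_one : sigmaMat k (1 : Matrix (Fin n) (Fin n) ℝ) = n.choose k := by
  rw [sigmaMat_eq_coeff_sigmaPoly isHermitian_one, ← diagonal_one, sigmaPoly_diagonal]
  simp [coeff_one_add_X_pow]

theorem sigmaMat_transpose_mul_mul {Q : Matrix (Fin n) (Fin n) ℝ} (hQ : Qᵀ * Q = 1)
    (hA : A.IsHermitian) : sigmaMat k (Qᵀ * A * Q) = sigmaMat k A := by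
  have hQA : (Qᵀ * A * Q).IsHermitian := isHermitian_conjTranspose_mul_mul Q hA
  rw [sigmaMat_eq_coeff_sigmaPoly hA, sigmaMat_eq_coeff_sigmaPoly hQA,
    sigmaPoly_mul_mul_of_mul_eq_one A hQ]

theorem coeff_sigmaPoly_diagonal_le_add_vecMulVec {l : Fin n → ℝ}
    (hl : ∀ j, 1 ≤ j → j ≤ k → 0 < (sigmaPoly (diagonal l)).coeff j) (v : Fin n → ℝ) {j : ℕ}
    (hj : 1 ≤ j) (hjk : j ≤ k) :
    (sigmaPoly (diagonal l)).coeff j ≤ (sigmaPoly (diagonal l + vecMulVec v v)).coeff j := by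
  obtain ⟨j, rfl⟩ := Nat.exists_eq_add_of_le' hj
  rw [sigmaPoly_diagonal_add_vecMulVec, coeff_add, finsetSum_coeff, le_add_iff_nonneg_right]
  -- Deleting one eigenvalue leaves the other ones in the next larger cone `Γ_{k-1}`.
  refine Finset.sum_nonneg fun i _ ↦ ?_
  set q := ∏ m ∈ Finset.univ.erase i, (1 + C (l m) * X) with hq
  have hsplits : q.Splits := Splits.prod fun m _ ↦ by
    rw [add_comm, ← C_1]
    exact Splits.of_natDegree_le_one natDegree_linear_le
  have hq₀ : q.coeff 0 = 1 := by simp [hq, coeff_zero_eq_eval_zero, eval_prod]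
  have hmul : sigmaPoly (diagonal l) = (1 + C (l i) * X) * q := by
    rw [sigmaPoly_diagonal, hq,
      Finset.mul_prod_erase _ (fun m ↦ 1 + C (l m) * X) (Finset.mem_univ i)]
  rw [hmul] at hl
  rw [mul_assoc, coeff_C_mul, coeff_X_mul]
  exact mul_nonneg (mul_self_nonneg _) (coeff_pos_of_coeff_one_add_C_mul_X_mul_pos hsplits
    (hq₀ ▸ one_pos) hl j (by lia)).le

namespace InGardingCone

theorem isHermitian (hA : InGardingCone k A) : A.IsHermitian :=
  hA.1

theorem sigmaMat_pos (hA : InGardingCone k A) (hk : 1 ≤ k) : 0 < sigmaMat k A :=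
  (inGardingCone_iff.1 hA).2 k hk le_rfl

theorem trace_pos (hA : InGardingCone k A) (hk : 1 ≤ k) : 0 < A.trace := by
  rw [← coeff_one_sigmaPoly, ← sigmaMat_eq_coeff_sigmaPoly hA.isHermitian]
  exact (inGardingCone_iff.1 hA).2 1 le_rfl hk

theorem smul (hA : InGardingCone k A) {c : ℝ} (hc : 0 < c) : InGardingCone k (c • A) := by
  refine inGardingCone_iff.2 ⟨hA.isHermitian.smul (.all c), fun j hj hjk ↦ ?_⟩
  rw [sigmaMat_smul hA.isHermitian]
  exact mul_pos (pow_pos hc j) ((inGardingCone_iff.1 hA).2 j hj hjk)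

theorem transpose_mul_mul (hA : InGardingCone k A) {Q : Matrix (Fin n) (Fin n) ℝ}
    (hQ : Qᵀ * Q = 1) : InGardingCone k (Qᵀ * A * Q) := by
  refine inGardingCone_iff.2
    ⟨isHermitian_conjTranspose_mul_mul Q hA.isHermitian, fun j hj hjk ↦ ?_⟩
  rw [sigmaMat_transpose_mul_mul hQ hA.isHermitian]
  exact (inGardingCone_iff.1 hA).2 j hj hjk

theorem sigmaMat_le_add_vecMulVec (hA : InGardingCone k A) (v : Fin n → ℝ) {j : ℕ} (hj : 1 ≤ j)
    (hjk : j ≤ k) : sigmaMat j A ≤ sigmaMat j (A + vecMulVec v v) := by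
  have hH := hA.isHermitian
  set U := (hH.eigenvectorUnitary : Matrix (Fin n) (Fin n) ℝ)
  have hU : U * Uᵀ = 1 := eigenvectorUnitary_mul_transpose hH
  have hUv : U *ᵥ (Uᵀ *ᵥ v) = v := by rw [mulVec_mulVec, hU, one_mulVec]
  have hconj : A + vecMulVec v v =
      U * (diagonal hH.eigenvalues + vecMulVec (Uᵀ *ᵥ v) (Uᵀ *ᵥ v)) * Uᵀ := by
    rw [Matrix.mul_add, Matrix.add_mul, ← eq_eigenvectorUnitary_mul_diagonal_mul_transpose hH,
      mul_vecMulVec, vecMulVec_mul, vecMul_transpose, hUv]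
  rw [sigmaMat_eq_coeff_sigmaPoly hH,
    sigmaMat_eq_coeff_sigmaPoly (hH.add (isHermitian_vecMulVec_self v)), hconj,
    sigmaPoly_mul_mul_of_mul_eq_one _ hU, sigmaPoly_eq_sigmaPoly_diagonal_eigenvalues hH]
  refine coeff_sigmaPoly_diagonal_le_add_vecMulVec (fun i hi hik ↦ ?_) _ hj hjk
  rw [coeff_sigmaPoly_diagonal]
  exact hA.2 i hi hik

theorem add_vecMulVec (hA : InGardingCone k A) (v : Fin n → ℝ) :
    InGardingCone k (A + vecMulVec v v) := by
  refine inGardingCone_iff.2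
    ⟨hA.isHermitian.add (isHermitian_vecMulVec_self v), fun j hj hjk ↦ ?_⟩
  exact ((inGardingCone_iff.1 hA).2 j hj hjk).trans_le (hA.sigmaMat_le_add_vecMulVec v hj hjk)

theorem sigmaMat_le_of_posSemidef_sub (hA : InGardingCone k A) (hk : 1 ≤ k)
    (h : (B - A).PosSemidef) : sigmaMat k A ≤ sigmaMat k B := by
  obtain ⟨m, v, hv⟩ := posSemidef_iff_eq_sum_vecMulVec.1 h
  suffices ∀ s : Finset (Fin m), InGardingCone k (A + ∑ i ∈ s, vecMulVec (v i) (v i)) ∧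
      sigmaMat k A ≤ sigmaMat k (A + ∑ i ∈ s, vecMulVec (v i) (v i)) by
    have hB : B = A + ∑ i, vecMulVec (v i) (v i) := by
      rw [← sub_eq_iff_eq_add', hv]
      rfl
    exact hB ▸ (this Finset.univ).2
  intro s
  induction s using Finset.induction_on with
  | empty => simpa using hA
  | insert i s hi ih =>
    rw [Finset.sum_insert hi, add_comm (vecMulVec _ _), ← add_assoc]
    exact ⟨ih.1.add_vecMulVec (v i), ih.2.trans (ih.1.sigmaMat_le_add_vecMulVec (v i) hk le_rfl)⟩

end InGardingCone

end GardingCone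

/-! ### Hessians -/

section LocalMax

theorem deriv_deriv_nonpos_of_isLocalMax {g : ℝ → ℝ} {a : ℝ} (hmax : IsLocalMax g a)
    (hg : ContinuousAt g a) : deriv (deriv g) a ≤ 0 := by
  by_contra! hpos
  have hmin : IsLocalMin g a := isLocalMin_of_deriv_deriv_pos hpos hmax.deriv_eq_zero hg
  have hconst : g =ᶠ[𝓝 a] fun _ ↦ g a := by
    filter_upwards [hmax, hmin] with t hle hge using le_antisymm hle hge
  have hzero : deriv (deriv g) a = 0 := by
    simpa using (hconst.deriv.trans (by simp : _ =ᶠ[𝓝 a] fun _ ↦ (0 : ℝ))).deriv_eq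
  exact hpos.ne' hzero

variable {E : Type*} [NormedAddCommGroup E] [NormedSpace ℝ E]

theorem deriv_deriv_comp_add_smul {f : E → ℝ} {x : E} (hf : ContDiffAt ℝ 2 f x) (v : E) :
    deriv (deriv fun t : ℝ ↦ f (x + t • v)) 0 = iteratedFDeriv ℝ 2 f x ![v, v] := by
  have hline (t : ℝ) : HasDerivAt (fun t : ℝ ↦ x + t • v) v t := by
    simpa using ((hasDerivAt_id t).smul_const v).const_add x
  have htendsto : Tendsto (fun t : ℝ ↦ x + t • v) (𝓝 0) (𝓝 x) := by
    simpa using (hline 0).continuousAt.tendsto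
  have hdiff : ∀ᶠ y in 𝓝 x, DifferentiableAt ℝ f y := by
    filter_upwards [hf.eventually (by simp)] with y hy using hy.differentiableAt (by simp)
  have hderiv : deriv (fun t : ℝ ↦ f (x + t • v)) =ᶠ[𝓝 0] fun t ↦ fderiv ℝ f (x + t • v) v := by
    filter_upwards [htendsto.eventually hdiff] with t ht
    exact (ht.hasFDerivAt.comp_hasDerivAt t (hline t)).deriv
  have hfderiv : HasFDerivAt (fderiv ℝ f) (fderiv ℝ (fderiv ℝ f) x) (x + (0 : ℝ) • v) := by
    have hf' : ContDiffAt ℝ 1 (fderiv ℝ f) x := hf.fderiv_right (by norm_num)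
    simpa using (hf'.differentiableAt (by simp)).hasFDerivAt
  have hcomp : HasDerivAt (fun t : ℝ ↦ fderiv ℝ f (x + t • v)) (fderiv ℝ (fderiv ℝ f) x v) 0 :=
    hfderiv.comp_hasDerivAt (0 : ℝ) (hline 0)
  have hsecond : HasDerivAt (fun t : ℝ ↦ fderiv ℝ f (x + t • v) v)
      (fderiv ℝ (fderiv ℝ f) x v v) 0 :=
    (ContinuousLinearMap.apply ℝ ℝ v).hasFDerivAt.comp_hasDerivAt (0 : ℝ) hcomp
  rw [hderiv.deriv_eq, hsecond.deriv, iteratedFDeriv_two_apply]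
  rfl

theorem iteratedFDeriv_two_nonpos_of_isLocalMax {f : E → ℝ} {x : E} (hmax : IsLocalMax f x)
    (hf : ContDiffAt ℝ 2 f x) (v : E) : iteratedFDeriv ℝ 2 f x ![v, v] ≤ 0 := by
  have htendsto : Tendsto (fun t : ℝ ↦ x + t • v) (𝓝 0) (𝓝 x) := by
    simpa using (by fun_prop : Continuous fun t : ℝ ↦ x + t • v).tendsto 0
  rw [← deriv_deriv_comp_add_smul hf]
  refine deriv_deriv_nonpos_of_isLocalMax ?_ ?_
  · filter_upwards [htendsto.eventually hmax] with t ht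
    simpa using ht
  · exact ContinuousAt.comp (by simpa using hf.continuousAt) (by fun_prop)

end LocalMax

section Hessian

open Matrix

variable {n : ℕ} {f g : Euc n → ℝ} {x : Euc n}

theorem dotProduct_hessian_mulVec (f : Euc n → ℝ) (x v w : Euc n) :
    v.ofLp ⬝ᵥ hessian f x *ᵥ w.ofLp = iteratedFDeriv ℝ 2 f x ![v, w] := by
  have hsum (y : Euc n) : ∑ i, y i • EuclideanSpace.single i (1 : ℝ) = y := by
    simpa using (EuclideanSpace.basisFun (Fin n) ℝ).sum_repr y
  conv_rhs => rw [← hsum v, ← hsum w]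
  simp only [hessian, iteratedFDeriv_two_apply, dotProduct, mulVec, cons_val_zero, cons_val_one,
    map_sum, map_smul, _root_.sum_apply, _root_.smul_apply, smul_eq_mul, Finset.mul_sum]
  rw [Finset.sum_comm]
  exact Finset.sum_congr rfl fun i _ ↦ Finset.sum_congr rfl fun j _ ↦ by ring

theorem hessian_isHermitian_s7 (hf : ContDiffAt ℝ 2 f x) : (hessian f x).IsHermitian := by
  ext i j
  have hsymm := (hf.isSymmSndFDerivAt (by simp)).eq
    (EuclideanSpace.single j (1 : ℝ)) (EuclideanSpace.single i (1 : ℝ))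
  simpa [hessian, iteratedFDeriv_two_apply] using hsymm

theorem hessianWithin_eq_hessian {s : Set (Euc n)} (hs : s ∈ 𝓝 x) :
    hessianWithin f s x = hessian f x := by
  ext i j
  rw [hessianWithin, hessian, iteratedFDerivWithin_congr_set (eventuallyEq_univ.2 hs),
    iteratedFDerivWithin_univ]

theorem hessian_const_mul (hf : ContDiffAt ℝ 2 f x) (c : ℝ) :
    hessian (fun y ↦ c * f y) x = c • hessian f x := by
  ext i j
  exact DFunLike.congr_fun (iteratedFDeriv_const_smul_apply (a := c) hf) _

theorem hessian_sub (hf : ContDiffAt ℝ 2 f x) (hg : ContDiffAt ℝ 2 g x) :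
    hessian (fun y ↦ f y - g y) x = hessian f x - hessian g x := by
  ext i j
  exact DFunLike.congr_fun (iteratedFDeriv_sub_apply hf hg) _

theorem posSemidef_neg_hessian_of_isLocalMax (hmax : IsLocalMax f x) (hf : ContDiffAt ℝ 2 f x) :
    (-hessian f x).PosSemidef := by
  refine .of_dotProduct_mulVec_nonneg (hessian_isHermitian_s7 hf).neg fun v ↦ ?_
  have h := dotProduct_hessian_mulVec f x (WithLp.toLp 2 v) (WithLp.toLp 2 v)
  rw [star_trivial, neg_mulVec, dotProduct_neg, h, neg_nonneg]
  exact iteratedFDeriv_two_nonpos_of_isLocalMax hmax hf _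

theorem hessian_comp_norm_sub_sq {φ : ℝ → ℝ} (hφ : ContDiff ℝ 2 φ) (x₀ x : Euc n) :
    hessian (fun y ↦ φ (‖y - x₀‖ ^ 2)) x =
      (4 * deriv (deriv φ) (‖x - x₀‖ ^ 2)) • vecMulVec (x - x₀).ofLp (x - x₀).ofLp +
        (2 * deriv φ (‖x - x₀‖ ^ 2)) • 1 := by
  have hsq (y : Euc n) : HasFDerivAt (fun y ↦ ‖y - x₀‖ ^ 2) (2 • innerSL ℝ (y - x₀)) y := by
    simpa using ((hasFDerivAt_id y).sub_const x₀).norm_sq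
  have hφ₁ (t : ℝ) : HasDerivAt φ (deriv φ t) t := (hφ.differentiable (by simp) t).hasDerivAt
  have hφ₂ (t : ℝ) : HasDerivAt (deriv φ) (deriv (deriv φ) t) t :=
    ((hφ.deriv' (n := 1)).differentiable (by simp) t).hasDerivAt
  have hfirst : fderiv ℝ (fun y ↦ φ (‖y - x₀‖ ^ 2)) =
      fun y ↦ deriv φ (‖y - x₀‖ ^ 2) • (2 • innerSL ℝ (y - x₀)) :=
    funext fun y ↦ ((hφ₁ _).comp_hasFDerivAt y (hsq y)).fderiv
  have hinner : HasFDerivAt (fun y ↦ 2 • innerSL ℝ (y - x₀)) (2 • innerSL ℝ : Euc n →L[ℝ] _) x :=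
    ((innerSL ℝ).hasFDerivAt.comp x ((hasFDerivAt_id x).sub_const x₀)).const_smul 2
  have hsecond := (((hφ₂ _).comp_hasFDerivAt x (hsq x)).smul hinner).fderiv
  ext i j
  rw [hessian, iteratedFDeriv_two_apply, hfirst]
  refine (congrArg (· (EuclideanSpace.single i 1) (EuclideanSpace.single j 1)) hsecond).trans ?_
  have hinnerSL (a b : Euc n) : (innerSL ℝ : Euc n →L[ℝ] Euc n →L[ℝ] ℝ) a b = ⟪a, b⟫ := rfl
  simp only [_root_.add_apply, _root_.smul_apply, ContinuousLinearMap.smulRight_apply, hinnerSL,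
    Matrix.add_apply, Matrix.smul_apply, vecMulVec_apply, Matrix.one_apply,
    EuclideanSpace.inner_single_right, PiLp.single_apply, smul_eq_mul, nsmul_eq_mul,
    Function.comp_apply, conj_trivial, one_mul, eq_comm (a := j)]
  push_cast
  ring

end Hessian

section HessianSimilarity

open Matrix

variable {n : ℕ}

theorem hessian_comp_continuousLinearEquiv (f : Euc n → ℝ) (L : Euc n ≃L[ℝ] Euc n)
    {Q : Matrix (Fin n) (Fin n) ℝ} (hQ : ∀ v : Euc n, Q *ᵥ v.ofLp = (L v).ofLp) (x : Euc n) :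
    hessian (f ∘ L) x = Qᵀ * hessian f (L x) * Q := by
  have hcomp (v w : Euc n) :
      iteratedFDeriv ℝ 2 (f ∘ L) x ![v, w] = iteratedFDeriv ℝ 2 f (L x) ![L v, L w] := by
    have h := L.iteratedFDerivWithin_comp_right (s := univ) f uniqueDiffOn_univ (mem_univ (L x)) 2
    rw [preimage_univ, iteratedFDerivWithin_univ, iteratedFDerivWithin_univ] at h
    rw [h, ContinuousMultilinearMap.compContinuousLinearMap_apply]
    congr 1
    ext i
    fin_cases i <;> rfl
  ext i j
  have hentry (A : Matrix (Fin n) (Fin n) ℝ) : A i j = Pi.single i 1 ⬝ᵥ A *ᵥ Pi.single j 1 := by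
    simp
  rw [hentry (Qᵀ * _ * Q), ← mulVec_mulVec, ← mulVec_mulVec, dotProduct_mulVec _ Qᵀ,
    vecMul_transpose, show hessian (f ∘ L) x i j = _ from hcomp _ _, ← dotProduct_hessian_mulVec,
    ← hQ, ← hQ]
  rfl

theorem exists_orthogonal_mulVec_eq (R : Euc n ≃ₗᵢ[ℝ] Euc n) :
    ∃ Q : Matrix (Fin n) (Fin n) ℝ, Qᵀ * Q = 1 ∧ ∀ v : Euc n, Q *ᵥ v.ofLp = (R v).ofLp := by
  obtain ⟨Q, hQ⟩ : ∃ Q, toEuclideanCLM (n := Fin n) (𝕜 := ℝ) Q = (R : Euc n →L[ℝ] Euc n) :=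
    toEuclideanCLM.surjective _
  refine ⟨Q, EquivLike.injective (toEuclideanCLM (n := Fin n) (𝕜 := ℝ)) ?_, fun v ↦ ?_⟩
  · rw [← conjTranspose_eq_transpose_of_trivial, ← star_eq_conjTranspose, map_mul, map_star, hQ,
      map_one, ContinuousLinearMap.star_eq_adjoint, LinearIsometryEquiv.adjoint_eq_symm]
    ext1 v
    exact R.symm_apply_apply v
  · rw [← ofLp_toEuclideanCLM, hQ]
    rfl

theorem hessian_comp_smul_isometry (f : Euc n → ℝ) {R : Euc n ≃ₗᵢ[ℝ] Euc n}
    {Q : Matrix (Fin n) (Fin n) ℝ} (hQ : ∀ v : Euc n, Q *ᵥ v.ofLp = (R v).ofLp) {l : ℝ}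
    (hl : l ≠ 0) (x : Euc n) :
    hessian (fun z ↦ f (l • R z)) x = l ^ 2 • (Qᵀ * hessian f (l • R x) * Q) := by
  let L : Euc n ≃L[ℝ] Euc n :=
    R.toContinuousLinearEquiv.trans (ContinuousLinearEquiv.smulLeft (Units.mk0 l hl))
  have hL (v : Euc n) : (l • Q) *ᵥ v.ofLp = (L v).ofLp := by
    rw [smul_mulVec, hQ]
    rfl
  refine (hessian_comp_continuousLinearEquiv f L hL x).trans ?_
  rw [transpose_smul, smul_mul, smul_mul, Matrix.mul_smul, smul_smul, sq]
  rfl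

end HessianSimilarity

/-! ### Maximum and comparison principles -/

theorem le_of_forall_not_isLocalMax {X : Type*} [TopologicalSpace X] {D : Set X} {f : X → ℝ}
    {c : ℝ} (hD : IsCompact (closure D)) (hf : ContinuousOn f (closure D))
    (hmax : ∀ x ∈ D, ¬IsLocalMax f x) (hc : ∀ x ∈ frontier D, f x ≤ c) :
    ∀ x ∈ closure D, f x ≤ c := by
  intro x hx
  obtain ⟨y, hy, hymax⟩ := hD.exists_isMaxOn ⟨x, hx⟩ hf
  refine (hymax hx).trans (hc y ⟨hy, fun hyD ↦ hmax y (interior_subset hyD) ?_⟩)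
  filter_upwards [mem_interior_iff_mem_nhds.1 hyD] with z hz using hymax (subset_closure hz)

section Comparison

open Matrix

variable {n k : ℕ} {D : Set (Euc n)} {f g : Euc n → ℝ}

theorem not_isLocalMax_of_trace_hessian_pos {x : Euc n} (hf : ContDiffAt ℝ 2 f x)
    (htrace : 0 < (hessian f x).trace) : ¬IsLocalMax f x := by
  intro hmax
  have h := (posSemidef_neg_hessian_of_isLocalMax hmax hf).trace_nonneg
  rw [trace_neg] at h
  linarith

theorem not_isLocalMax_sub_of_sigmaMat_hessian_lt {x : Euc n} (hk : 1 ≤ k)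
    (hf : ContDiffAt ℝ 2 f x) (hg : ContDiffAt ℝ 2 g x) (hcone : InGardingCone k (hessian f x))
    (hlt : sigmaMat k (hessian g x) < sigmaMat k (hessian f x)) :
    ¬IsLocalMax (fun y ↦ f y - g y) x := by
  intro hmax
  have h := posSemidef_neg_hessian_of_isLocalMax hmax (hf.sub hg)
  rw [hessian_sub hf hg, neg_sub] at h
  exact hlt.not_ge (hcone.sigmaMat_le_of_posSemidef_sub hk h)

theorem sub_le_of_sigmaMat_hessian_le (hk : 1 ≤ k) (hD : IsCompact (closure D))
    (hf : ContinuousOn f (closure D)) (hg : ContinuousOn g (closure D))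
    (hf₂ : ∀ x ∈ D, ContDiffAt ℝ 2 f x) (hg₂ : ∀ x ∈ D, ContDiffAt ℝ 2 g x)
    (hcone : ∀ x ∈ D, InGardingCone k (hessian f x))
    (hle : ∀ x ∈ D, sigmaMat k (hessian g x) ≤ sigmaMat k (hessian f x)) {c : ℝ}
    (hc : ∀ x ∈ frontier D, f x - g x ≤ c) : ∀ x ∈ closure D, f x - g x ≤ c := by
  intro x hx
  obtain ⟨S, hS₀, hS⟩ : ∃ S > 0, ∀ y ∈ closure D, |f y| ≤ S := by
    obtain ⟨S, hS⟩ := hD.exists_bound_of_continuousOn hf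
    exact ⟨max S 1, by positivity, fun y hy ↦ (hS y hy).trans (le_max_left _ _)⟩
  have hscaled (η : ℝ) (hη : 0 < η) : (1 + η) * f x - g x ≤ c + η * S := by
    refine le_of_forall_not_isLocalMax (f := fun y ↦ (1 + η) * f y - g y) hD
      ((continuousOn_const.mul hf).sub hg) (fun y hy ↦ ?_) (fun y hy ↦ ?_) x hx
    · have hH := hessian_const_mul (hf₂ y hy) (1 + η)
      have hpos := (hcone y hy).sigmaMat_pos hk
      have hpow : 1 < (1 + η) ^ k := one_lt_pow₀ (by linarith) (by omega)
      refine not_isLocalMax_sub_of_sigmaMat_hessian_lt hk (contDiffAt_const.mul (hf₂ y hy))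
        (hg₂ y hy) (hH ▸ (hcone y hy).smul (by linarith)) ?_
      rw [hH, sigmaMat_smul (hcone y hy).isHermitian]
      exact (hle y hy).trans_lt (lt_mul_of_one_lt_left hpos hpow)
    · have hfS := mul_le_mul_of_nonneg_left (abs_le.1 (hS y hy.1)).2 hη.le
      linarith [hc y hy]
  refine le_of_forall_pos_le_add fun e he ↦ ?_
  have hη := hscaled (e / (2 * S)) (by positivity)
  have hfS := mul_le_mul_of_nonneg_left (abs_le.1 (hS x hx)).1 (by positivity : 0 ≤ e / (2 * S))
  have hcancel : e / (2 * S) * S = e / 2 := by field_simp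
  linarith

/-- `f` is a strictly `k`-convex classical solution of `σ_k(D²f) = 1` at the points of `D`,
continuous up to the boundary. The Hessian is the unrestricted one, so `D` is meant to be open. -/
structure IsKHessianSol (k : ℕ) (D : Set (Euc n)) (f : Euc n → ℝ) : Prop where
  continuousOn : ContinuousOn f (closure D)
  contDiffAt : ∀ x ∈ D, ContDiffAt ℝ 2 f x
  inGardingCone : ∀ x ∈ D, InGardingCone k (hessian f x)
  sigmaMat_eq_one : ∀ x ∈ D, sigmaMat k (hessian f x) = 1

namespace IsKHessianSol

theorem of_contDiffOn {s : Set (Euc n)} (hf : ContDiffOn ℝ 2 f s) (hDs : closure D ⊆ s)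
    (hs : ∀ x ∈ D, s ∈ 𝓝 x) (hcone : ∀ x ∈ D, InGardingCone k (hessianWithin f s x) ∧
      sigmaMat k (hessianWithin f s x) = 1) : IsKHessianSol k D f where
  continuousOn := hf.continuousOn.mono hDs
  contDiffAt x hx := hf.contDiffAt (hs x hx)
  inGardingCone x hx := hessianWithin_eq_hessian (f := f) (hs x hx) ▸ (hcone x hx).1
  sigmaMat_eq_one x hx := hessianWithin_eq_hessian (f := f) (hs x hx) ▸ (hcone x hx).2

theorem mono {D' : Set (Euc n)} (hf : IsKHessianSol k D f) (hD : D' ⊆ D) :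
    IsKHessianSol k D' f where
  continuousOn := hf.continuousOn.mono (closure_mono hD)
  contDiffAt x hx := hf.contDiffAt x (hD hx)
  inGardingCone x hx := hf.inGardingCone x (hD hx)
  sigmaMat_eq_one x hx := hf.sigmaMat_eq_one x (hD hx)

theorem comp_smul_isometry (hf : IsKHessianSol k D f) {l : ℝ} (hl : 0 < l)
    (R : Euc n ≃ₗᵢ[ℝ] Euc n) {D' : Set (Euc n)} (hmaps : MapsTo (fun z ↦ l • R z) D' D) :
    IsKHessianSol k D' fun z ↦ (l ^ 2)⁻¹ * f (l • R z) := by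
  have hcont : Continuous fun z ↦ l • R z := by fun_prop
  have hsmooth (x) (hx : x ∈ D') : ContDiffAt ℝ 2 (fun z ↦ f (l • R z)) x :=
    (hf.contDiffAt _ (hmaps hx)).comp x (R.contDiff.const_smul l).contDiffAt
  obtain ⟨Q, hQQ, hQ⟩ := exists_orthogonal_mulVec_eq R
  have hH (x) (hx : x ∈ D') : hessian (fun z ↦ (l ^ 2)⁻¹ * f (l • R z)) x =
      Qᵀ * hessian f (l • R x) * Q := by
    rw [hessian_const_mul (hsmooth x hx), hessian_comp_smul_isometry f hQ hl.ne', smul_smul,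
      inv_mul_cancel₀ (by positivity), one_smul]
  refine ⟨?_, fun x hx ↦ contDiffAt_const.mul (hsmooth x hx), fun x hx ↦ ?_, fun x hx ↦ ?_⟩
  · exact continuousOn_const.mul
      (hf.continuousOn.comp hcont.continuousOn (hmaps.closure hcont))
  · exact hH x hx ▸ (hf.inGardingCone _ (hmaps hx)).transpose_mul_mul hQQ
  · rw [hH x hx, sigmaMat_transpose_mul_mul hQQ (hf.inGardingCone _ (hmaps hx)).isHermitian,
      hf.sigmaMat_eq_one _ (hmaps hx)]

theorem sub_le (hf : IsKHessianSol k D f) (hg : IsKHessianSol k D g) (hk : 1 ≤ k)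
    (hD : IsBounded D) {c : ℝ} (hc : ∀ x ∈ frontier D, f x - g x ≤ c) :
    ∀ x ∈ closure D, f x - g x ≤ c :=
  sub_le_of_sigmaMat_hessian_le hk hD.isCompact_closure hf.continuousOn hg.continuousOn
    hf.contDiffAt hg.contDiffAt hf.inGardingCone
    (fun x hx ↦ by rw [hf.sigmaMat_eq_one x hx, hg.sigmaMat_eq_one x hx]) hc

theorem abs_sub_le (hf : IsKHessianSol k D f) (hg : IsKHessianSol k D g) (hk : 1 ≤ k)
    (hD : IsBounded D) {c : ℝ} (hc : ∀ x ∈ frontier D, |f x - g x| ≤ c) :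
    ∀ x ∈ closure D, |f x - g x| ≤ c := by
  refine fun x hx ↦ abs_sub_le_iff.2 ⟨?_, ?_⟩
  · exact hf.sub_le hg hk hD (fun y hy ↦ (abs_sub_le_iff.1 (hc y hy)).1) x hx
  · exact hg.sub_le hf hk hD (fun y hy ↦ (abs_sub_le_iff.1 (hc y hy)).2) x hx

theorem le_of_trace_hessian_nonpos (hf : IsKHessianSol k D f) (hk : 1 ≤ k) (hD : IsBounded D)
    (hg : ContDiff ℝ 2 g) (htrace : ∀ x ∈ D, (hessian g x).trace ≤ 0)
    (hle : ∀ x ∈ frontier D, f x ≤ g x) : ∀ x ∈ closure D, f x ≤ g x := by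
  intro x hx
  refine sub_nonpos.1 (le_of_forall_not_isLocalMax (f := fun y ↦ f y - g y) hD.isCompact_closure
    (hf.continuousOn.sub hg.continuous.continuousOn) (fun y hy ↦ ?_)
    (fun y hy ↦ sub_nonpos.2 (hle y hy)) x hx)
  refine not_isLocalMax_of_trace_hessian_pos ((hf.contDiffAt y hy).sub hg.contDiffAt) ?_
  rw [hessian_sub (hf.contDiffAt y hy) hg.contDiffAt, trace_sub]
  linarith [htrace y hy, (hf.inGardingCone y hy).trace_pos hk]

theorem not_isLocalMax (hf : IsKHessianSol k D f) (hk : 1 ≤ k) {x : Euc n} (hx : x ∈ D) :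
    ¬IsLocalMax f x :=
  not_isLocalMax_of_trace_hessian_pos (hf.contDiffAt x hx) ((hf.inGardingCone x hx).trace_pos hk)

theorem le_of_frontier_le (hf : IsKHessianSol k D f) (hk : 1 ≤ k) (hD : IsBounded D) {c : ℝ}
    (hc : ∀ x ∈ frontier D, f x ≤ c) : ∀ x ∈ closure D, f x ≤ c :=
  le_of_forall_not_isLocalMax hD.isCompact_closure hf.continuousOn
    (fun _ ↦ hf.not_isLocalMax hk) hc

theorem lt_of_frontier_le (hf : IsKHessianSol k D f) (hk : 1 ≤ k) (hDo : IsOpen D)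
    (hD : IsBounded D) {c : ℝ} (hc : ∀ x ∈ frontier D, f x ≤ c) : ∀ x ∈ D, f x < c := by
  have hle := hf.le_of_frontier_le hk hD hc
  refine fun x hx ↦ (hle x (subset_closure hx)).lt_of_ne fun heq ↦ hf.not_isLocalMax hk hx ?_
  filter_upwards [hDo.mem_nhds hx] with y hy using heq ▸ hle y (subset_closure hy)

end IsKHessianSol

end Comparison

/-! ### Solutions in a domain with a small hole -/

section Ring

variable {n k : ℕ} {Ω : Set (Euc n)} {x₀ x : Euc n} {ε M : ℝ} {u ψ : Euc n → ℝ}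

theorem mem_ringSet_iff (hΩ : IsOpen Ω) (hε : 0 < ε) (hball : closedBall x₀ ε ⊆ Ω) :
    x ∈ ringSet Ω x₀ ε ↔ x ∈ closure Ω ∧ ε ≤ ‖x - x₀‖ := by
  have hcompl : closure (closedBall x₀ ε)ᶜ = {y | ε ≤ ‖y - x₀‖} := by
    ext y
    simp [closure_compl, interior_closedBall _ hε.ne', dist_eq_norm]
  rw [ringSet, sdiff_eq]
  refine ⟨fun hx ↦ ?_, fun ⟨hx, hεx⟩ ↦ ?_⟩
  · exact ⟨closure_mono inter_subset_left hx, hcompl.subset (closure_mono inter_subset_right hx)⟩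
  · rcases hεx.lt_or_eq with hlt | heq
    · exact isClosed_closedBall.isOpen_compl.closure_inter
        ⟨hx, by simpa [dist_eq_norm] using hlt⟩
    · exact hΩ.inter_closure ⟨hball (by simp [dist_eq_norm, heq]), hcompl.superset hεx⟩

theorem frontier_diff_closedBall_subset (Ω : Set (Euc n)) (x₀ : Euc n) (ε : ℝ) :
    frontier (Ω \ closedBall x₀ ε) ⊆ frontier Ω ∪ sphere x₀ ε := by
  rw [sdiff_eq]
  refine (frontier_inter_subset _ _).trans (union_subset_union inter_subset_left ?_)
  rw [frontier_compl]
  exact inter_subset_right.trans frontier_closedBall_subset_sphere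

theorem IsSol.isKHessianSol (hu : IsSol k Ω x₀ ε M u) (hΩ : IsOpen Ω) :
    IsKHessianSol k (Ω \ closedBall x₀ ε) u :=
  .of_contDiffOn hu.1 subset_rfl
    (fun _ hx ↦ mem_of_superset ((hΩ.sdiff isClosed_closedBall).mem_nhds hx) subset_closure) hu.2.1

theorem IsSol22.isKHessianSol (hψ : IsSol22 k Ω ψ) (hΩ : IsOpen Ω) : IsKHessianSol k Ω ψ :=
  .of_contDiffOn (hψ.1.of_le (WithTop.coe_le_coe.2 le_top)) subset_rfl
    (fun _ hx ↦ mem_of_superset (hΩ.mem_nhds hx) subset_closure) hψ.2.1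

theorem cnk_pos (hkn : k ≤ n) : 0 < cnk n k :=
  Real.rpow_pos_of_pos (mod_cast Nat.choose_pos hkn) _

theorem cnk_pow (hk : 1 ≤ k) : cnk n k ^ k = n.choose k := by
  rw [cnk, one_div, Real.rpow_inv_natCast_pow (by positivity) (by omega)]

theorem hessian_underSol (k : ℕ) (x₀ : Euc n) (ε M : ℝ) (x : Euc n) :
    hessian (underSol k x₀ ε M) x = (cnk n k)⁻¹ • 1 := by
  have hderiv : deriv (fun t ↦ t / (2 * cnk n k) - ε ^ 2 / (2 * cnk n k) - M) =
      fun _ ↦ (2 * cnk n k)⁻¹ := by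
    ext t
    simp [div_eq_mul_inv]
  refine (hessian_comp_norm_sub_sq
    (φ := fun t ↦ t / (2 * cnk n k) - ε ^ 2 / (2 * cnk n k) - M) (by fun_prop) x₀ x).trans ?_
  rw [hderiv, deriv_const, mul_zero, zero_smul, zero_add, mul_inv, mul_inv_cancel_left₀ two_ne_zero]

theorem isKHessianSol_underSol (hk : 1 ≤ k) (hkn : k ≤ n) (x₀ : Euc n) (ε M : ℝ) :
    IsKHessianSol k univ (underSol k x₀ ε M) := by
  have hsmooth : ContDiff ℝ 2 (underSol k x₀ ε M) :=
    ((((contDiff_id.sub contDiff_const).norm_sq ℝ).div_const _).sub contDiff_const).sub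
      contDiff_const
  have hsigma (j : ℕ) : sigmaMat j ((cnk n k)⁻¹ • (1 : Matrix (Fin n) (Fin n) ℝ)) =
      (cnk n k)⁻¹ ^ j * n.choose j := by
    rw [sigmaMat_smul Matrix.isHermitian_one, sigmaMat_one]
  refine ⟨hsmooth.continuous.continuousOn, fun x _ ↦ hsmooth.contDiffAt, fun x _ ↦ ?_,
    fun x _ ↦ ?_⟩ <;> rw [hessian_underSol]
  · refine inGardingCone_iff.2 ⟨Matrix.isHermitian_one.smul (.all _), fun j _ hjk ↦ ?_⟩
    rw [hsigma]
    have hchoose : 0 < (n.choose j : ℝ) := mod_cast Nat.choose_pos (hjk.trans hkn)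
    have := cnk_pos hkn
    positivity
  · rw [hsigma, ← cnk_pow hk, inv_pow, inv_mul_cancel₀ (pow_pos (cnk_pos hkn) k).ne']

end Ring

/-! ### Barriers -/

theorem exists_one_le_mul_le_of_neg {X : Type*} [TopologicalSpace X] {s : Set X} {f : X → ℝ}
    (hs : IsCompact s) (hf : ContinuousOn f s) (hneg : ∀ x ∈ s, f x < 0) (c : ℝ) :
    ∃ K : ℝ, 1 ≤ K ∧ ∀ x ∈ s, K * f x ≤ c := by
  rcases s.eq_empty_or_nonempty with rfl | hne
  · exact ⟨1, le_rfl, by simp⟩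
  obtain ⟨y, hy, hmax⟩ := hs.exists_isMaxOn hne hf
  refine ⟨max 1 (c / f y), le_max_left _ _, fun x hx ↦ ?_⟩
  calc max 1 (c / f y) * f x ≤ max 1 (c / f y) * f y := by gcongr; exact hmax hx
    _ ≤ c / f y * f y := mul_le_mul_of_nonpos_right (le_max_right _ _) (hneg y hy).le
    _ = c := div_mul_cancel₀ c (hneg y hy).ne

theorem exists_one_lt_mul_sq_le_norm_sub_sq {E : Type*} [NormedAddCommGroup E] [NormedSpace ℝ E]
    [ProperSpace E] {Ω : Set E} (hΩ : IsOpen Ω) {x₀ : E} {r : ℝ} (hr : 0 < r)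
    (hball : closedBall x₀ r ⊆ Ω) : ∃ s : ℝ, 1 < s ∧ ∀ x ∉ Ω, s * r ^ 2 ≤ ‖x - x₀‖ ^ 2 := by
  obtain ⟨δ, hδ, hδΩ⟩ := (isCompact_closedBall x₀ r).exists_cthickening_subset_open hΩ hball
  rw [cthickening_closedBall hδ.le hr.le] at hδΩ
  refine ⟨(δ + r) ^ 2 / r ^ 2, ?_, fun x hx ↦ ?_⟩
  · rw [one_lt_div (by positivity)]
    gcongr
    linarith
  · have hnorm : δ + r < ‖x - x₀‖ := by
      simpa [dist_eq_norm] using fun h : x ∈ closedBall x₀ (δ + r) ↦ hx (hδΩ h)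
    rw [div_mul_cancel₀ _ (by positivity)]
    gcongr

section Barrier

variable {n k : ℕ} {Ω : Set (Euc n)} {x₀ x : Euc n} {ε M : ℝ} {u ψ : Euc n → ℝ}

theorem trace_hessian_add_mul_one_sub_exp_nonpos (c ρ : ℝ) {A b : ℝ} (hA : 0 ≤ A) (hb : 0 ≤ b)
    (hx : n ≤ 2 * b * ‖x - x₀‖ ^ 2) :
    (hessian (fun y ↦ c + A * (1 - Real.exp (-b * (‖y - x₀‖ ^ 2 - ρ)))) x).trace ≤ 0 := by
  have hexp (t : ℝ) : HasDerivAt (fun t ↦ Real.exp (-b * (t - ρ)))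
      (-b * Real.exp (-b * (t - ρ))) t := by
    simpa [mul_comm] using (((hasDerivAt_id t).sub_const ρ).const_mul (-b)).exp
  have hfirst : deriv (fun t ↦ c + A * (1 - Real.exp (-b * (t - ρ)))) =
      fun t ↦ A * b * Real.exp (-b * (t - ρ)) := by
    ext t
    rw [((((hexp t).const_sub 1).const_mul A).const_add c).deriv]
    ring
  have hsecond (t : ℝ) : deriv (fun t ↦ A * b * Real.exp (-b * (t - ρ))) t =
      -(A * b ^ 2 * Real.exp (-b * (t - ρ))) := by
    rw [((hexp t).const_mul (A * b)).deriv]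
    ring
  have htrace : (Matrix.vecMulVec (x - x₀).ofLp (x - x₀).ofLp).trace = ‖x - x₀‖ ^ 2 := by
    rw [Matrix.trace_vecMulVec, EuclideanSpace.real_norm_sq_eq]
    simp only [dotProduct, sq]
  rw [hessian_comp_norm_sub_sq (φ := fun t ↦ c + A * (1 - Real.exp (-b * (t - ρ))))
    (by fun_prop), hfirst, hsecond, Matrix.trace_add, Matrix.trace_smul, Matrix.trace_smul,
    htrace, Matrix.trace_one, Fintype.card_fin, smul_eq_mul, smul_eq_mul]
  set e := Real.exp (-b * (‖x - x₀‖ ^ 2 - ρ))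
  calc 4 * -(A * b ^ 2 * e) * ‖x - x₀‖ ^ 2 + 2 * (A * b * e) * n
      = 2 * (A * b * e) * (n - 2 * b * ‖x - x₀‖ ^ 2) := by ring
    _ ≤ 0 := mul_nonpos_of_nonneg_of_nonpos (by positivity) (by linarith)

namespace IsSol

theorem forall_frontier (hu : IsSol k Ω x₀ ε M u) {p : Euc n → ℝ → Prop}
    (houter : ∀ x ∈ frontier Ω, p x 0) (hinner : ∀ x ∈ sphere x₀ ε, p x (-M)) :
    ∀ x ∈ frontier (Ω \ closedBall x₀ ε), p x (u x) := by
  intro x hx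
  rcases frontier_diff_closedBall_subset Ω x₀ ε hx with hx | hx
  · exact (hu.2.2.1 x hx).symm ▸ houter x hx
  · exact (hu.2.2.2 x hx).symm ▸ hinner x hx

theorem nonpos (hu : IsSol k Ω x₀ ε M u) (hk : 1 ≤ k) (hΩ : IsOpen Ω) (hΩb : IsBounded Ω)
    (hM : 0 ≤ M) : ∀ x ∈ ringSet Ω x₀ ε, u x ≤ 0 :=
  (hu.isKHessianSol hΩ).le_of_frontier_le hk (hΩb.subset sdiff_subset)
    (hu.forall_frontier (p := fun _ t ↦ t ≤ 0) (fun _ _ ↦ le_rfl) (fun _ _ ↦ neg_nonpos.2 hM))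

theorem neg_le (hu : IsSol k Ω x₀ ε M u) (hk : 1 ≤ k) (hkn : k ≤ n) (hΩ : IsOpen Ω)
    (hΩb : IsBounded Ω) (hε : 0 < ε) (hball : closedBall x₀ ε ⊆ Ω)
    (hsub : ∀ x ∈ frontier Ω, underSol k x₀ ε M x ≤ 0) :
    ∀ x ∈ ringSet Ω x₀ ε, -M ≤ u x := by
  intro x hx
  have hle : underSol k x₀ ε M x - u x ≤ 0 := by
    refine ((isKHessianSol_underSol hk hkn x₀ ε M).mono (subset_univ _)).sub_le
      (hu.isKHessianSol hΩ) hk (hΩb.subset sdiff_subset) ?_ x hx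
    refine hu.forall_frontier (p := fun x t ↦ underSol k x₀ ε M x - t ≤ 0) (fun y hy ↦ ?_)
      fun y hy ↦ ?_
    · simpa using hsub y hy
    · rw [mem_sphere_iff_norm] at hy
      simp [underSol, hy]
  have hnorm := ((mem_ringSet_iff hΩ hε hball).1 hx).2
  have hcnk := cnk_pos hkn
  have hdiv : ε ^ 2 / (2 * cnk n k) ≤ ‖x - x₀‖ ^ 2 / (2 * cnk n k) := by gcongr
  rw [underSol] at hle
  linarith

theorem mul_le (hu : IsSol k Ω x₀ ε M u) (hψ : IsSol22 k Ω ψ) (hk : 1 ≤ k) (hΩ : IsOpen Ω)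
    (hΩb : IsBounded Ω) {K : ℝ} (hK : 1 ≤ K) (hKψ : ∀ x ∈ sphere x₀ ε, K * ψ x ≤ -M) :
    ∀ x ∈ ringSet Ω x₀ ε, K * ψ x ≤ u x := by
  intro x hx
  have hψD := (hψ.isKHessianSol hΩ).mono (sdiff_subset (t := closedBall x₀ ε))
  have huD := hu.isKHessianSol hΩ
  refine sub_nonpos.1 (sub_le_of_sigmaMat_hessian_le (f := fun y ↦ K * ψ y) hk
    (hΩb.subset sdiff_subset).isCompact_closure (continuousOn_const.mul hψD.continuousOn)
    huD.continuousOn (fun y hy ↦ contDiffAt_const.mul (hψD.contDiffAt y hy)) huD.contDiffAt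
    (fun y hy ↦ ?_) (fun y hy ↦ ?_) ?_ x hx)
  · rw [hessian_const_mul (hψD.contDiffAt y hy)]
    exact (hψD.inGardingCone y hy).smul (by linarith)
  · rw [hessian_const_mul (hψD.contDiffAt y hy),
      sigmaMat_smul (hψD.inGardingCone y hy).isHermitian, hψD.sigmaMat_eq_one y hy,
      huD.sigmaMat_eq_one y hy, mul_one]
    exact one_le_pow₀ hK
  · refine hu.forall_frontier (p := fun y t ↦ K * ψ y - t ≤ 0) (fun y hy ↦ ?_) fun y hy ↦ ?_
    · simp [hψ.2.2 y hy]
    · linarith [hKψ y hy]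

theorem le_exp_barrier (hu : IsSol k Ω x₀ ε M u) (hk : 1 ≤ k) (hΩ : IsOpen Ω)
    (hΩb : IsBounded Ω) (hε : 0 ≤ ε) {A b : ℝ} (hA : 0 ≤ A) (hb : 0 ≤ b) (hbε : n ≤ 2 * b * ε ^ 2)
    (houter : ∀ x ∈ frontier Ω, M ≤ A * (1 - Real.exp (-b * (‖x - x₀‖ ^ 2 - ε ^ 2)))) :
    ∀ x ∈ ringSet Ω x₀ ε,
      u x ≤ -M + A * (1 - Real.exp (-b * (‖x - x₀‖ ^ 2 - ε ^ 2))) := by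
  have hsmooth : ContDiff ℝ 2 fun x ↦
      -M + A * (1 - Real.exp (-b * (‖x - x₀‖ ^ 2 - ε ^ 2))) := by
    have hsq : ContDiff ℝ 2 fun x ↦ ‖x - x₀‖ ^ 2 := (contDiff_id.sub contDiff_const).norm_sq ℝ
    fun_prop
  refine (hu.isKHessianSol hΩ).le_of_trace_hessian_nonpos hk (hΩb.subset sdiff_subset) hsmooth
    (fun x hx ↦ trace_hessian_add_mul_one_sub_exp_nonpos _ _ hA hb ?_)
    (hu.forall_frontier
      (p := fun x t ↦ t ≤ -M + A * (1 - Real.exp (-b * (‖x - x₀‖ ^ 2 - ε ^ 2))))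
      (fun x hx ↦ by linarith [houter x hx])
      (fun x hx ↦ by simp [mem_sphere_iff_norm.1 hx]))
  have hεx : ε ≤ ‖x - x₀‖ := by
    simpa [dist_eq_norm] using (not_le.1 hx.2).le
  calc (n : ℝ) ≤ 2 * b * ε ^ 2 := hbε
    _ ≤ 2 * b * ‖x - x₀‖ ^ 2 := by gcongr

theorem le_inner_barrier (hu : IsSol k Ω x₀ ε M u) (hk : 1 ≤ k) (hn : 0 < n) (hΩ : IsOpen Ω)
    (hΩb : IsBounded Ω) (hε : 0 < ε) (hM : 0 ≤ M) {s : ℝ} (hs : 1 < s)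
    (hfrontier : ∀ x ∈ frontier Ω, s * ε ^ 2 ≤ ‖x - x₀‖ ^ 2) :
    ∀ x ∈ ringSet Ω x₀ ε, u x ≤
      -M + M / (1 - Real.exp (-(n / 2) * (s - 1))) * (n / 2) * (‖x - x₀‖ ^ 2 / ε ^ 2 - 1) := by
  have hn' : (0 : ℝ) < n := mod_cast hn
  have hexp (t : ℝ) : -(n / (2 * ε ^ 2)) * (t - ε ^ 2) = -(n / 2) * (t / ε ^ 2 - 1) := by
    field_simp
  set E := 1 - Real.exp (-(n / 2) * (s - 1)) with hE_def
  have hE : 0 < E := by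
    rw [hE_def, sub_pos, Real.exp_lt_one_iff]
    nlinarith
  intro x hx
  have hbarrier := hu.le_exp_barrier hk hΩ hΩb hε.le (A := M / E) (b := n / (2 * ε ^ 2))
    (by positivity) (by positivity) (le_of_eq (by field_simp)) (fun y hy ↦ ?_) x hx
  · rw [hexp] at hbarrier
    have hlinear := Real.one_sub_le_exp_neg (n / 2 * (‖x - x₀‖ ^ 2 / ε ^ 2 - 1))
    rw [← neg_mul] at hlinear
    calc u x ≤ _ := hbarrier
      _ ≤ -M + M / E * (n / 2 * (‖x - x₀‖ ^ 2 / ε ^ 2 - 1)) := by gcongr; linarith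
      _ = _ := by ring
  · calc M = M / E * E := (div_mul_cancel₀ M hE.ne').symm
      _ ≤ _ := by
        rw [hexp, hE_def]
        gcongr _ * (1 - Real.exp ?_)
        have hsy : s ≤ ‖y - x₀‖ ^ 2 / ε ^ 2 := (le_div_iff₀ (by positivity)).2 (hfrontier y hy)
        nlinarith

theorem neg_mul_norm_sub_le (hu : IsSol k Ω x₀ ε M u) (hψ : IsSol22 k Ω ψ) (hk : 1 ≤ k)
    (hΩ : IsOpen Ω) (hΩb : IsBounded Ω) {K : ℝ} (hK : 1 ≤ K)
    (hKψ : ∀ x ∈ sphere x₀ ε, K * ψ x ≤ -M) {L : NNReal}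
    (hL : LipschitzOnWith L ψ (closure Ω)) :
    ∀ x ∈ ringSet Ω x₀ ε, ∀ z ∈ frontier Ω, -(K * L * ‖x - z‖) ≤ u x := by
  intro x hx z hz
  have hdist := hL.dist_le_mul x (closure_mono sdiff_subset hx) z hz.1
  rw [dist_eq_norm, dist_eq_norm, hψ.2.2 z hz, sub_zero, Real.norm_eq_abs] at hdist
  calc -(K * L * ‖x - z‖) = K * -(L * ‖x - z‖) := by ring
    _ ≤ K * ψ x := by gcongr; exact (abs_le.1 hdist).1
    _ ≤ u x := hu.mul_le hψ hk hΩ hΩb hK hKψ x hx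

end IsSol

/-- The bounds on `u` provided by the barriers at both components of the boundary of
`Ω \ B̄_ε(x₀)`; `C₁` controls `u` from below at `∂Ω` and `C₂` controls it from above at the hole,
in the scale-invariant variable `|x - x₀| / ε`. -/
structure BarrierBounds (Ω : Set (Euc n)) (x₀ : Euc n) (ε M C₁ C₂ : ℝ) (u : Euc n → ℝ) :
    Prop where
  C₁_nonneg : 0 ≤ C₁
  C₂_nonneg : 0 ≤ C₂
  nonpos : ∀ x ∈ ringSet Ω x₀ ε, u x ≤ 0
  neg_le : ∀ x ∈ ringSet Ω x₀ ε, -M ≤ u x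
  neg_mul_le : ∀ x ∈ ringSet Ω x₀ ε, ∀ z ∈ frontier Ω, -(C₁ * ‖x - z‖) ≤ u x
  le_inner : ∀ x ∈ ringSet Ω x₀ ε, u x ≤ -M + C₂ * (‖x - x₀‖ ^ 2 / ε ^ 2 - 1)

theorem exists_barrierBounds (hk : 1 ≤ k) (hkn : k ≤ n) (hΩ : IsOpen Ω) (hΩconv : Convex ℝ Ω)
    (hΩb : IsBounded Ω) {ε₀ : ℝ} (hε₀ : 0 < ε₀) (hball : closedBall x₀ ε₀ ⊆ Ω)
    (hψ : IsSol22 k Ω ψ) (hM : 0 ≤ M)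
    (hsub : ∀ ε ∈ Ioo 0 ε₀, ∀ x ∈ frontier Ω, underSol k x₀ ε M x ≤ 0) :
    ∃ C₁ C₂ : ℝ, ∀ ε ∈ Ioo 0 ε₀, ∀ u, IsSol k Ω x₀ ε M u → BarrierBounds Ω x₀ ε M C₁ C₂ u := by
  have hψsol := hψ.isKHessianSol hΩ
  obtain ⟨L, hL⟩ := ((hψ.1.of_le (by simp)).locallyLipschitzOn
    hΩconv.closure).exists_lipschitzOnWith_of_compact hΩb.isCompact_closure
  obtain ⟨K, hK, hKψ⟩ := exists_one_le_mul_le_of_neg (isCompact_closedBall x₀ ε₀)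
    (hψsol.continuousOn.mono (hball.trans subset_closure))
    (fun x hx ↦ hψsol.lt_of_frontier_le hk hΩ hΩb (fun y hy ↦ (hψ.2.2 y hy).le) x (hball hx)) (-M)
  obtain ⟨s, hs, hsΩ⟩ := exists_one_lt_mul_sq_le_norm_sub_sq hΩ hε₀ hball
  have hexp : Real.exp (-(n / 2) * (s - 1)) ≤ 1 :=
    Real.exp_le_one_iff.2 <|
      mul_nonpos_of_nonpos_of_nonneg (neg_nonpos.2 (by positivity)) (by linarith)
  refine ⟨K * L, M / (1 - Real.exp (-(n / 2) * (s - 1))) * (n / 2), fun ε hε u hu ↦ ?_⟩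
  have hεball : closedBall x₀ ε ⊆ closedBall x₀ ε₀ := closedBall_subset_closedBall hε.2.le
  refine ⟨by positivity, mul_nonneg (div_nonneg hM (sub_nonneg.2 hexp)) (by positivity),
    hu.nonpos hk hΩ hΩb hM, hu.neg_le hk hkn hΩ hΩb hε.1 (hεball.trans hball) (hsub ε hε),
    hu.neg_mul_norm_sub_le hψ hk hΩ hΩb hK
      (fun x hx ↦ hKψ x (hεball (sphere_subset_closedBall hx))) hL,
    hu.le_inner_barrier hk (by omega) hΩ hΩb hε.1 hM hs fun x hx ↦ ?_⟩
  rw [hΩ.frontier_eq] at hx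
  calc s * ε ^ 2 ≤ s * ε₀ ^ 2 :=
      mul_le_mul_of_nonneg_left (pow_le_pow_left₀ hε.1.le hε.2.le 2) (by linarith)
    _ ≤ ‖x - x₀‖ ^ 2 := hsΩ x hx.2

end Barrier

/-! ### Similarities of Euclidean space -/

section Similarity

open NormedSpace (normalize norm_smul_normalize)

theorem norm_normalize_le_one {E : Type*} [NormedAddCommGroup E] [NormedSpace ℝ E] (x : E) :
    ‖normalize x‖ ≤ 1 := by
  rcases eq_or_ne x 0 with rfl | hx
  · simp
  · exact (NormedSpace.norm_normalize_eq_one_iff.2 hx).le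

theorem norm_mul_norm_normalize_sub_le {E : Type*} [NormedAddCommGroup E] [NormedSpace ℝ E]
    (x y : E) : ‖x‖ * ‖normalize x - normalize y‖ ≤ 2 * ‖x - y‖ := by
  have hsplit : ‖x‖ • (normalize x - normalize y) = x - y - (‖x‖ - ‖y‖) • normalize y := by
    rw [smul_sub, sub_smul, norm_smul_normalize, norm_smul_normalize]
    abel
  calc ‖x‖ * ‖normalize x - normalize y‖ = ‖x - y - (‖x‖ - ‖y‖) • normalize y‖ := by
        rw [← hsplit, norm_smul, norm_norm]
    _ ≤ ‖x - y‖ + |‖x‖ - ‖y‖| * ‖normalize y‖ := by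
        rw [← Real.norm_eq_abs, ← norm_smul]
        exact norm_sub_le _ _
    _ ≤ ‖x - y‖ + ‖x - y‖ * 1 := by
        gcongr
        · exact abs_norm_sub_norm_le x y
        · exact norm_normalize_le_one y
    _ = 2 * ‖x - y‖ := by ring

variable {E : Type*} [NormedAddCommGroup E] [InnerProductSpace ℝ E]

theorem reflection_orthogonal_singleton_eq (v z : E) :
    (ℝ ∙ v)ᗮ.reflection z = z - (2 * ⟪normalize v, z⟫) • normalize v := by
  rw [Submodule.reflection_orthogonal_apply, Submodule.reflection_singleton_apply,
    NormedSpace.normalize, real_inner_smul_left, neg_sub, smul_smul, ← Nat.cast_smul_eq_nsmul ℝ,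
    smul_smul]
  congr 2
  simp only [Nat.cast_ofNat, RCLike.ofReal_real_eq_id, id]
  ring

theorem norm_reflection_orthogonal_singleton_sub_le (v w z : E) :
    ‖(ℝ ∙ v)ᗮ.reflection z - (ℝ ∙ w)ᗮ.reflection z‖ ≤
      4 * ‖normalize v - normalize w‖ * ‖z‖ := by
  rw [reflection_orthogonal_singleton_eq, reflection_orthogonal_singleton_eq]
  set p := normalize v
  set q := normalize w
  have hsplit : z - (2 * ⟪p, z⟫) • p - (z - (2 * ⟪q, z⟫) • q) =
      (2 : ℝ) • (⟪q - p, z⟫ • q + ⟪p, z⟫ • (q - p)) := by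
    rw [inner_sub_left]
    module
  have hp : |⟪p, z⟫| ≤ ‖z‖ := (abs_real_inner_le_norm p z).trans
    (mul_le_of_le_one_left (norm_nonneg z) (norm_normalize_le_one v))
  calc ‖z - (2 * ⟪p, z⟫) • p - (z - (2 * ⟪q, z⟫) • q)‖
      ≤ 2 * (|⟪q - p, z⟫| * ‖q‖ + |⟪p, z⟫| * ‖q - p‖) := by
        rw [hsplit, norm_smul, Real.norm_two, ← Real.norm_eq_abs, ← Real.norm_eq_abs, ← norm_smul,
          ← norm_smul]
        gcongr
        exact norm_add_le _ _
    _ ≤ 2 * (‖q - p‖ * ‖z‖ * 1 + ‖z‖ * ‖q - p‖) := by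
        gcongr
        · exact abs_real_inner_le_norm _ _
        · exact norm_normalize_le_one w
    _ = 4 * ‖p - q‖ * ‖z‖ := by
        rw [norm_sub_rev]
        ring

theorem exists_linearIsometryEquiv_apply_eq {a b : E} (hab : ‖a‖ = ‖b‖) :
    ∃ R : E ≃ₗᵢ[ℝ] E, R a = b ∧ ∀ z, ‖b‖ * ‖R z - z‖ ≤ 4 * ‖a - b‖ * ‖z‖ := by
  refine ⟨((ℝ ∙ (a - -b))ᗮ.reflection).trans ((ℝ ∙ b)ᗮ.reflection), ?_, fun z ↦ ?_⟩
  · rw [LinearIsometryEquiv.trans_apply, Submodule.reflection_sub (by rwa [norm_neg]), map_neg,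
      Submodule.reflection_orthogonalComplement_singleton_eq_neg, neg_neg]
  · set w := (ℝ ∙ (a - -b))ᗮ.reflection z
    have hw : (ℝ ∙ (a - -b))ᗮ.reflection w = z := Submodule.reflection_reflection _ z
    have hwz : ‖w‖ = ‖z‖ := LinearIsometryEquiv.norm_map _ z
    have hdir : ‖b‖ * ‖normalize b - normalize (a - -b)‖ ≤ ‖a - b‖ := by
      have h := norm_mul_norm_normalize_sub_le ((2 : ℝ) • b) (a - -b)
      rw [NormedSpace.normalize_smul_of_pos two_pos, norm_smul, Real.norm_two, mul_assoc,
        show (2 : ℝ) • b - (a - -b) = -(a - b) by module, norm_neg] at h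
      exact le_of_mul_le_mul_left h two_pos
    calc ‖b‖ * ‖(ℝ ∙ b)ᗮ.reflection w - z‖
        = ‖b‖ * ‖(ℝ ∙ b)ᗮ.reflection w - (ℝ ∙ (a - -b))ᗮ.reflection w‖ := by rw [hw]
      _ ≤ ‖b‖ * (4 * ‖normalize b - normalize (a - -b)‖ * ‖w‖) := by
          gcongr
          exact norm_reflection_orthogonal_singleton_sub_le b (a - -b) w
      _ = 4 * (‖b‖ * ‖normalize b - normalize (a - -b)‖) * ‖z‖ := by
          rw [hwz]
          ring
      _ ≤ 4 * ‖a - b‖ * ‖z‖ := by gcongr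

theorem exists_smul_linearIsometryEquiv_apply_eq {x y : E} (hx : x ≠ 0) (hxy : ‖x‖ ≤ ‖y‖) :
    ∃ (l : ℝ) (R : E ≃ₗᵢ[ℝ] E), 1 ≤ l ∧ l • R x = y ∧ l - 1 ≤ ‖y - x‖ / ‖x‖ ∧
      ∀ z, ‖l • R z - z‖ ≤ 9 * (‖y - x‖ / ‖x‖) * ‖z‖ := by
  have hx' : 0 < ‖x‖ := norm_pos_iff.2 hx
  set l := ‖y‖ / ‖x‖ with hl_def
  have hl : 1 ≤ l := (one_le_div hx').2 hxy
  have hlx : l * ‖x‖ = ‖y‖ := div_mul_cancel₀ _ hx'.ne'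
  have hl_sub : l - 1 ≤ ‖y - x‖ / ‖x‖ := by
    rw [le_div_iff₀ hx', sub_mul, hlx, one_mul]
    exact norm_sub_norm_le y x
  have hnorm : ‖l • x‖ = ‖y‖ := by rw [norm_smul, Real.norm_of_nonneg (by linarith), hlx]
  obtain ⟨R, hRx, hR⟩ := exists_linearIsometryEquiv_apply_eq hnorm
  refine ⟨l, R, hl, by rw [← map_smul, hRx], hl_sub, fun z ↦ ?_⟩
  have hdist : ‖l • x - y‖ ≤ 2 * ‖y - x‖ :=
    calc ‖l • x - y‖ = ‖(l - 1) • x - (y - x)‖ := congrArg norm (by module)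
      _ ≤ (l - 1) * ‖x‖ + ‖y - x‖ := by
          refine (norm_sub_le _ _).trans_eq ?_
          rw [norm_smul, Real.norm_of_nonneg (sub_nonneg.2 hl)]
      _ ≤ 2 * ‖y - x‖ := by linarith [(le_div_iff₀ hx').1 hl_sub]
  have hrot : l * ‖R z - z‖ ≤ 8 * (‖y - x‖ / ‖x‖) * ‖z‖ := by
    rw [hl_def, div_mul_eq_mul_div, div_le_iff₀ hx']
    calc ‖y‖ * ‖R z - z‖ ≤ 4 * ‖l • x - y‖ * ‖z‖ := hR z
      _ ≤ 4 * (2 * ‖y - x‖) * ‖z‖ := by gcongr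
      _ = 8 * (‖y - x‖ / ‖x‖) * ‖z‖ * ‖x‖ := by field_simp; ring
  calc ‖l • R z - z‖ = ‖l • (R z - z) + (l - 1) • z‖ := congrArg norm (by module)
    _ ≤ l * ‖R z - z‖ + (l - 1) * ‖z‖ := by
        refine (norm_add_le _ _).trans_eq ?_
        rw [norm_smul, norm_smul, Real.norm_of_nonneg (by linarith),
          Real.norm_of_nonneg (sub_nonneg.2 hl)]
    _ ≤ 8 * (‖y - x‖ / ‖x‖) * ‖z‖ + ‖y - x‖ / ‖x‖ * ‖z‖ := by gcongr
    _ = 9 * (‖y - x‖ / ‖x‖) * ‖z‖ := by ring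

end Similarity

/-! ### Comparison with a similar solution -/

theorem mem_closure_and_mem_frontier_of_mem_frontier_inter_preimage {X Y : Type*}
    [TopologicalSpace X] [TopologicalSpace Y] {s : Set X} {t : Set Y} {f : X → Y} {x : X}
    (hf : Continuous f) (hx : x ∈ frontier (s ∩ f ⁻¹' t)) :
    x ∈ closure s ∧ f x ∈ closure t ∧ (x ∈ frontier s ∨ f x ∈ frontier t) := by
  rcases frontier_inter_subset _ _ hx with ⟨hs, ht⟩ | ⟨hs, ht⟩
  · exact ⟨hs.1, hf.closure_preimage_subset t ht, .inl hs⟩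
  · have hft := hf.frontier_preimage_subset t ht
    exact ⟨hs, hft.1, .inr hft⟩

section TwoPoint

variable {n k : ℕ} {Ω : Set (Euc n)} {x₀ x y z w : Euc n} {ε M C₁ C₂ d l R₀ κ : ℝ} {u : Euc n → ℝ}

theorem one_sub_inv_sq_le (hl : 1 ≤ l) : 1 - (l ^ 2)⁻¹ ≤ 2 * (l - 1) := by
  have h := one_add_mul_le_pow (a := l⁻¹ - 1) (by linarith [inv_pos.2 (one_pos.trans_le hl)]) 2
  have hinv : 1 - l⁻¹ ≤ l - 1 := by
    calc 1 - l⁻¹ = (l - 1) / l := by rw [sub_div, div_self (by linarith), one_div]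
      _ ≤ l - 1 := div_le_self (sub_nonneg.2 hl) hl
  rw [add_sub_cancel, inv_pow] at h
  push_cast at h
  linarith

namespace BarrierBounds

theorem abs_le (hB : BarrierBounds Ω x₀ ε M C₁ C₂ u) (hw : w ∈ ringSet Ω x₀ ε) : |u w| ≤ M :=
  _root_.abs_le.2 ⟨hB.neg_le w hw, by linarith [hB.neg_le w hw, hB.nonpos w hw]⟩

theorem abs_le_of_norm_sub_le (hB : BarrierBounds Ω x₀ ε M C₁ C₂ u) (hz : z ∈ frontier Ω)
    (hw : w ∈ ringSet Ω x₀ ε) (hwz : ‖w - z‖ ≤ d) : |u w| ≤ C₁ * d := by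
  have hC₁ := hB.C₁_nonneg
  rw [abs_of_nonpos (hB.nonpos w hw), _root_.neg_le]
  exact (neg_le_neg (by gcongr)).trans (hB.neg_mul_le w hw z hz)

theorem abs_neg_sub_inv_sq_mul_le (hB : BarrierBounds Ω x₀ ε M C₁ C₂ u) (hε : 0 < ε) (hl : 1 ≤ l)
    (hlκ : l - 1 ≤ κ) (hw : w ∈ ringSet Ω x₀ ε) (hwl : ‖w - x₀‖ = l * ε) :
    |-M - (l ^ 2)⁻¹ * u w| ≤ 2 * (M + C₂) * κ := by
  have hC₂ := hB.C₂_nonneg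
  have hM : 0 ≤ M := (abs_nonneg _).trans (hB.abs_le hw)
  have hlower := mul_le_mul_of_nonneg_left (hB.neg_le w hw) (by positivity : 0 ≤ (l ^ 2)⁻¹)
  have hupper := mul_le_mul_of_nonneg_left (hB.le_inner w hw) (by positivity : 0 ≤ (l ^ 2)⁻¹)
  have hinner : (l ^ 2)⁻¹ * (-M + C₂ * (‖w - x₀‖ ^ 2 / ε ^ 2 - 1)) =
      -M + (M + C₂) * (1 - (l ^ 2)⁻¹) := by
    rw [hwl]
    field_simp
    ring
  have hθ : (M + C₂) * (1 - (l ^ 2)⁻¹) ≤ (M + C₂) * (2 * κ) := by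
    gcongr
    linarith [one_sub_inv_sq_le hl]
  have hinv := mul_le_of_le_one_left hM (inv_le_one_of_one_le₀ (one_le_pow₀ hl (n := 2)))
  rw [_root_.abs_le]
  constructor <;> linarith

theorem abs_sub_inv_sq_mul_le_of_mem_frontier (hB : BarrierBounds Ω x₀ ε M C₁ C₂ u)
    (hu : IsSol k Ω x₀ ε M u) (hε : 0 < ε) (hl : 1 ≤ l) (hlκ : l - 1 ≤ κ)
    (hz : z ∈ ringSet Ω x₀ ε) (hw : w ∈ ringSet Ω x₀ ε) (hzε : ε ≤ ‖z - x₀‖)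
    (hwl : ‖w - x₀‖ = l * ‖z - x₀‖) (hwz : ‖w - z‖ ≤ d)
    (hfrontier : z ∈ frontier (Ω \ closedBall x₀ ε) ∨ w ∈ frontier (Ω \ closedBall x₀ ε)) :
    |u z - (l ^ 2)⁻¹ * u w| ≤ C₁ * d + 2 * (M + C₂) * κ := by
  have houter : 0 ≤ C₁ * d := mul_nonneg hB.C₁_nonneg ((norm_nonneg _).trans hwz)
  have hinner : 0 ≤ 2 * (M + C₂) * κ := by
    have hM : 0 ≤ M := (abs_nonneg _).trans (hB.abs_le hw)
    have hC₂ := hB.C₂_nonneg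
    have hκ : 0 ≤ κ := by linarith
    positivity
  have hsphere (h : ‖z - x₀‖ = ε) : |u z - (l ^ 2)⁻¹ * u w| ≤ C₁ * d + 2 * (M + C₂) * κ := by
    rw [hu.2.2.2 z (mem_sphere_iff_norm.2 h)]
    exact (hB.abs_neg_sub_inv_sq_mul_le hε hl hlκ hw (h ▸ hwl)).trans (by linarith)
  have hlz := le_mul_of_one_le_left (norm_nonneg (z - x₀)) hl
  rcases hfrontier with h | h <;>
    rcases frontier_diff_closedBall_subset Ω x₀ ε h with hΩ | hball
  · rw [hu.2.2.1 z hΩ, zero_sub, abs_neg, abs_mul, abs_of_nonneg (by positivity)]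
    calc (l ^ 2)⁻¹ * |u w| ≤ |u w| :=
          mul_le_of_le_one_left (abs_nonneg _) (inv_le_one_of_one_le₀ (one_le_pow₀ hl))
      _ ≤ _ := (hB.abs_le_of_norm_sub_le hΩ hw hwz).trans (by linarith)
  · exact hsphere (mem_sphere_iff_norm.1 hball)
  · rw [hu.2.2.1 w hΩ, mul_zero, sub_zero]
    exact (hB.abs_le_of_norm_sub_le hΩ hz (norm_sub_rev z w ▸ hwz)).trans (by linarith)
  · exact hsphere (hzε.antisymm' (by linarith [mem_sphere_iff_norm.1 hball]))

theorem abs_sub_inv_sq_mul_comp_le (hB : BarrierBounds Ω 0 ε M C₁ C₂ u) (hu : IsSol k Ω 0 ε M u)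
    (hk : 1 ≤ k) (hΩ : IsOpen Ω) (hΩR₀ : Ω ⊆ closedBall 0 R₀) (hε : 0 < ε)
    (hball : closedBall 0 ε ⊆ Ω) (hl : 1 ≤ l) (hlκ : l - 1 ≤ κ) {R : Euc n ≃ₗᵢ[ℝ] Euc n}
    (hR : ∀ z, ‖l • R z - z‖ ≤ 9 * κ * ‖z‖) (hx : x ∈ Ω \ closedBall 0 ε)
    (hy : l • R x ∈ Ω \ closedBall 0 ε) :
    |u x - (l ^ 2)⁻¹ * u (l • R x)| ≤ C₁ * (9 * κ * R₀) + 2 * (M + C₂) * κ := by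
  have hnorm {z} (hz : z ∈ ringSet Ω 0 ε) : ε ≤ ‖z - 0‖ ∧ ‖z‖ ≤ R₀ := by
    obtain ⟨hzΩ, hzε⟩ := (mem_ringSet_iff hΩ hε hball).1 hz
    exact ⟨hzε, mem_closedBall_zero_iff.1 (closure_minimal hΩR₀ isClosed_closedBall hzΩ)⟩
  have huD := hu.isKHessianSol hΩ
  set D := Ω \ closedBall 0 ε
  refine (huD.mono inter_subset_left).abs_sub_le (D := D ∩ (fun z ↦ l • R z) ⁻¹' D)
    (huD.comp_smul_isometry (by linarith) R inter_subset_right) hk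
    (isBounded_closedBall.subset (inter_subset_left.trans (sdiff_subset.trans hΩR₀)))
    (fun z hz ↦ ?_) x (subset_closure ⟨hx, hy⟩)
  obtain ⟨hz, hTz, hfrontier⟩ :=
    mem_closure_and_mem_frontier_of_mem_frontier_inter_preimage (by fun_prop) hz
  refine hB.abs_sub_inv_sq_mul_le_of_mem_frontier hu hε hl hlκ hz hTz (hnorm hz).1 ?_ ?_ hfrontier
  · rw [sub_zero, sub_zero, norm_smul, R.norm_map, Real.norm_of_nonneg (by linarith)]
  · have hκ : 0 ≤ κ := by linarith
    exact (hR z).trans (by gcongr; exact (hnorm hz).2)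

theorem abs_sub_le_of_norm_le (hB : BarrierBounds Ω 0 ε M C₁ C₂ u) (hu : IsSol k Ω 0 ε M u)
    (hk : 1 ≤ k) (hΩ : IsOpen Ω) (hΩR₀ : Ω ⊆ closedBall 0 R₀) (hε : 0 < ε)
    (hball : closedBall 0 ε ⊆ Ω) (hx : x ∈ Ω \ closedBall 0 ε) (hy : y ∈ Ω \ closedBall 0 ε)
    (hxy : ‖x‖ ≤ ‖y‖) :
    |u y - u x| ≤ (9 * C₁ * R₀ + 4 * M + 2 * C₂) * (‖y - x‖ / ‖x‖) := by
  have hx₀ : x ≠ 0 := by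
    rintro rfl
    exact hx.2 (mem_closedBall_self hε.le)
  obtain ⟨l, R, hl, rfl, hlκ, hR⟩ := exists_smul_linearIsometryEquiv_apply_eq hx₀ hxy
  set κ := ‖l • R x - x‖ / ‖x‖
  have hcomp := hB.abs_sub_inv_sq_mul_comp_le hu hk hΩ hΩR₀ hε hball hl hlκ hR hx hy
  have huy := hB.abs_le (subset_closure hy)
  have hinv : (l ^ 2)⁻¹ ≤ 1 := inv_le_one_of_one_le₀ (one_le_pow₀ hl)
  have hscale : (1 - (l ^ 2)⁻¹) * |u (l • R x)| ≤ 2 * κ * M := by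
    gcongr
    linarith [one_sub_inv_sq_le hl]
  calc |u (l • R x) - u x|
      = |(1 - (l ^ 2)⁻¹) * u (l • R x) - (u x - (l ^ 2)⁻¹ * u (l • R x))| := by
        congr 1
        ring
    _ ≤ (1 - (l ^ 2)⁻¹) * |u (l • R x)| + |u x - (l ^ 2)⁻¹ * u (l • R x)| := by
        refine (abs_sub _ _).trans_eq ?_
        rw [abs_mul, abs_of_nonneg (sub_nonneg.2 hinv)]
    _ ≤ (9 * C₁ * R₀ + 4 * M + 2 * C₂) * κ := by linarith

theorem abs_sub_le (hB : BarrierBounds Ω 0 ε M C₁ C₂ u) (hu : IsSol k Ω 0 ε M u)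
    (hk : 1 ≤ k) (hΩ : IsOpen Ω) (hΩR₀ : Ω ⊆ closedBall 0 R₀) (hε : 0 < ε)
    (hball : closedBall 0 ε ⊆ Ω) (hx : x ∈ Ω \ closedBall 0 ε) (hy : y ∈ Ω \ closedBall 0 ε) :
    |u y - u x| ≤ (9 * C₁ * R₀ + 4 * M + 2 * C₂) * (‖y - x‖ / min ‖x‖ ‖y‖) := by
  rcases le_total ‖x‖ ‖y‖ with hxy | hyx
  · rw [min_eq_left hxy]
    exact hB.abs_sub_le_of_norm_le hu hk hΩ hΩR₀ hε hball hx hy hxy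
  · rw [min_eq_right hyx, abs_sub_comm, norm_sub_rev]
    exact hB.abs_sub_le_of_norm_le hu hk hΩ hΩR₀ hε hball hy hx hyx

theorem norm_fderivWithin_le (hB : BarrierBounds Ω 0 ε M C₁ C₂ u) (hu : IsSol k Ω 0 ε M u)
    (hk : 1 ≤ k) (hΩ : IsOpen Ω) (hΩR₀ : Ω ⊆ closedBall 0 R₀) (hε : 0 < ε)
    (hball : closedBall 0 ε ⊆ Ω) (hx : x ∈ Ω \ closedBall 0 ε) :
    ‖fderivWithin ℝ u (ringSet Ω 0 ε) x‖ ≤ 2 * (9 * C₁ * R₀ + 4 * M + 2 * C₂) / ‖x‖ := by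
  have hx₀ : 0 < ‖x‖ := hε.trans (by simpa using hx.2)
  have hD : Ω \ closedBall 0 ε ∈ 𝓝 x := (hΩ.sdiff isClosed_closedBall).mem_nhds hx
  have hC : 0 ≤ 9 * C₁ * R₀ + 4 * M + 2 * C₂ := by
    have hC₁ := hB.C₁_nonneg
    have hC₂ := hB.C₂_nonneg
    have hM := (abs_nonneg _).trans (hB.abs_le (subset_closure hx))
    have hR₀ := nonempty_closedBall.1 ⟨x, hΩR₀ hx.1⟩
    positivity
  rw [ringSet, fderivWithin_of_mem_nhds (mem_of_superset hD subset_closure)]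
  refine norm_fderiv_le_of_lip' ℝ (by positivity) ?_
  have hhalf : ∀ᶠ y in 𝓝 x, ‖x‖ / 2 < ‖y‖ :=
    continuous_norm.continuousAt.eventually_const_lt (half_lt_self hx₀)
  filter_upwards [hD, hhalf] with y hy hxy
  calc |u y - u x| ≤ (9 * C₁ * R₀ + 4 * M + 2 * C₂) * (‖y - x‖ / min ‖x‖ ‖y‖) :=
        hB.abs_sub_le hu hk hΩ hΩR₀ hε hball hx hy
    _ ≤ (9 * C₁ * R₀ + 4 * M + 2 * C₂) * (‖y - x‖ / (‖x‖ / 2)) := by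
        gcongr
        exact le_min (half_le_self hx₀.le) hxy.le
    _ = 2 * (9 * C₁ * R₀ + 4 * M + 2 * C₂) / ‖x‖ * ‖y - x‖ := by field_simp

end BarrierBounds

end TwoPoint

theorem statement7_general {n k : ℕ} (hk : 1 ≤ k) (hkn : k ≤ n) {Ω₁ : Set (Euc n)}
    (hΩo : IsOpen Ω₁) (hΩconv : Convex ℝ Ω₁) (hΩb : IsBounded Ω₁) {ε₀ : ℝ} (hε₀ : 0 < ε₀)
    (hball : closedBall (0 : Euc n) ε₀ ⊆ Ω₁) {ψ : Euc n → ℝ} (hψ : IsSol22 k Ω₁ ψ) {M : ℝ}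
    (hM : 0 ≤ M) (hMsub : ∀ ε ∈ Ioo 0 ε₀, ∀ x ∈ frontier Ω₁, underSol k (0 : Euc n) ε M x ≤ 0) :
    ∃ C : ℝ, 0 < C ∧ ∀ ε ∈ Ioo 0 ε₀, ∀ u, IsSol k Ω₁ (0 : Euc n) ε M u →
      ∀ x ∈ Ω₁ \ closedBall 0 ε, ‖fderivWithin ℝ u (ringSet Ω₁ 0 ε) x‖ ≤ C / ‖x‖ := by
  obtain ⟨C₁, C₂, hB⟩ := exists_barrierBounds hk hkn hΩo hΩconv hΩb hε₀ hball hψ hM hMsub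
  obtain ⟨R₀, hΩR₀⟩ := hΩb.subset_closedBall 0
  refine ⟨max 1 (2 * (9 * C₁ * R₀ + 4 * M + 2 * C₂)), by positivity, fun ε hε u hu x hx ↦ ?_⟩
  have hεball := (closedBall_subset_closedBall hε.2.le).trans hball
  refine ((hB ε hε u hu).norm_fderivWithin_le hu hk hΩo hΩR₀ hε.1 hεball hx).trans ?_
  gcongr
  exact le_max_right _ _

/-- `C¹` estimates near the outer boundary, uniform in `ε`. -/
theorem statement7 {n k : ℕ} (hk : 1 ≤ k) (hkn : k ≤ n)
    (Ω₁ : Set (Euc n)) (hΩo : IsOpen Ω₁) (hΩconv : Convex ℝ Ω₁)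
    (hΩb : IsBounded Ω₁) (hΩs : HasSmoothBoundary Ω₁)
    (ε₀ : ℝ) (hε₀ : 0 < ε₀) (hball : closedBall (0 : Euc n) ε₀ ⊆ Ω₁)
    (ψ : Euc n → ℝ) (hψ : IsSol22 k Ω₁ ψ)
    (M₁ : ℝ) (hM₁ : 0 < M₁) (hM₁ψ : ∀ x ∈ closure Ω₁, -ψ x < M₁)
    (hM₁sub : ∀ ε ∈ Ioo (0:ℝ) ε₀, ∀ x ∈ frontier Ω₁, underSol k (0 : Euc n) ε M₁ x ≤ 0)
    (M : ℝ) (hM : M₁ < M)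
 :
    ∀ δ : ℝ, 0 < δ →
      (∀ x ∈ Ω₁, infDist x (frontier Ω₁) < δ → x ∉ closedBall (0 : Euc n) ε₀) →
      ∃ C : ℝ, 0 < C ∧ ∀ ε ∈ Ioo (0:ℝ) ε₀, ∀ u : Euc n → ℝ,
        IsSol k Ω₁ (0 : Euc n) ε M u →
        ∀ x ∈ Ω₁ \ closedBall (0 : Euc n) ε, infDist x (frontier Ω₁) < δ →
          ‖fderivWithin ℝ u (ringSet Ω₁ (0 : Euc n) ε) x‖ ≤ C := by
  intro δ _ hδ
  have hMsub : ∀ ε ∈ Ioo (0 : ℝ) ε₀, ∀ x ∈ frontier Ω₁, underSol k (0 : Euc n) ε M x ≤ 0 :=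
    fun ε hε x hx ↦ (sub_le_sub_left hM.le _).trans (hM₁sub ε hε x hx)
  obtain ⟨C, hC, hCu⟩ :=
    statement7_general hk hkn hΩo hΩconv hΩb hε₀ hball hψ (hM₁.trans hM).le hMsub
  refine ⟨C / ε₀, by positivity, fun ε hε u hu x hx hxδ ↦ (hCu ε hε u hu x hx).trans ?_⟩
  have hxε₀ : ε₀ < ‖x‖ := by simpa using hδ x hx.1 hxδ
  gcongr
end
end
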